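/- arXiv:0709.4679 — 5 statements merged into one kernel-verified Lean document; each statement's English description precedes it below -/
import Mathlib

section
/- There exist 0 < r2 < r1 < r0, a constant M > 0, and maps H : B_E(ξ0,r1) → ℝ^k and β : B_{ℝ^k}(h0,r1) × [0,r1] → E with the following properties: H(ξ) → h0 as ξ → ξ0; β(·,ε) is continuous on B_{ℝ^k}(h0,r1) for each ε ∈ [0,r1]; β(h,ε) ∈ E_{2,h} and ‖β(h,ε)‖ ≤ M ε for all h ∈ B_{ℝ^k}(h0,r1) and ε ∈ [0,r1]; β(h,ε)/ε → −R_h π_{2,h} Q(S(h),0) as ε → 0+, uniformly in h ∈ B_{ℝ^k}(h0,r1); and moreover: (1) if (ξ,ε) ∈ B_E(ξ0,r2) × [0,r2] satisfies F(ξ,ε) = 0, then h = H(ξ) satisfies (S'(h))^{-1} π_{1,h}[P(β(h,ε)+S(h)) − (β(h,ε)+S(h)) + ε Q(β(h,ε)+S(h),ε)] = 0; (2) if (h,ε) ∈ B_{ℝ^k}(h0,r1) × [0,r1] satisfies (S'(h))^{-1} π_{1,h}[P(β(h,ε)+S(h)) − (β(h,ε)+S(h)) + ε Q(β(h,ε)+S(h),ε)]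 = 0, then ξ = β(h,ε)+S(h) satisfies F(ξ,ε) = 0. -/
open Set Metric Topology Filter

theorem polyWeights (k : ℕ) (t0 : ℝ) (ht0 : 0 < t0) :
    ∃ (t w : Fin (k+1) → ℝ), (∀ j, t j ∈ Ioo 0 t0) ∧ (∑ j, w j = 1) ∧
      ∀ q : Polynomial ℝ, q.natDegree ≤ k → q.eval 1 = ∑ j, w j * q.eval (t j) := by
  let t : Fin (k+1) → ℝ := fun j => t0 / ((j:ℝ) + 2)
  have hinj : Set.InjOn t (Finset.univ : Finset (Fin (k+1))) := by
    intro a _ b _ hab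
    simp only [t] at hab
    have ha : (0:ℝ) < (a:ℝ) + 2 := by positivity
    have hb : (0:ℝ) < (b:ℝ) + 2 := by positivity
    rw [div_eq_div_iff ha.ne' hb.ne'] at hab
    have := mul_left_cancel₀ ht0.ne' hab
    have h3 : (a:ℝ) = b := by linarith
    exact Fin.ext (by exact_mod_cast h3)
  have key : ∀ q : Polynomial ℝ, q.natDegree ≤ k →
      q.eval 1 = ∑ j, (Lagrange.basis Finset.univ t j).eval 1 * q.eval (t j) := by
    intro q hq
    have h := Lagrange.eq_interpolate (f := q) hinj (by
      have : q.degree ≤ (k:ℕ) := Polynomial.degree_le_of_natDegree_le hq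
      refine lt_of_le_of_lt this ?_
      simp
      exact_mod_cast Nat.lt_succ_self k)
    conv_lhs => rw [h]
    rw [Lagrange.interpolate_apply, Polynomial.eval_finsetSum]
    refine Finset.sum_congr rfl fun j _ => ?_
    simp [mul_comm]
  refine ⟨t, fun j => (Lagrange.basis Finset.univ t j).eval 1, ?_, ?_, key⟩
  · intro j
    refine ⟨by positivity, ?_⟩
    rw [div_lt_iff₀ (by positivity)]
    have : (0:ℝ) ≤ (j:ℝ) := by positivity
    nlinarith
  · have := key 1 (by simp)
    simpa using this.symm

theorem detPoly {k : ℕ} (A : EuclideanSpace ℝ (Fin k) →L[ℝ] EuclideanSpace ℝ (Fin k)) :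
    ∃ q : Polynomial ℝ, q.natDegree ≤ k ∧
      ∀ t : ℝ, q.eval t = (ContinuousLinearMap.id ℝ _ + t • A).det := by
  let b := (EuclideanSpace.basisFun (Fin k) ℝ).toBasis
  let M := LinearMap.toMatrix b b (A : EuclideanSpace ℝ (Fin k) →ₗ[ℝ] _)
  refine ⟨Matrix.det ((Polynomial.X : Polynomial ℝ) • M.map Polynomial.C + (1 : Matrix (Fin k) (Fin k) ℝ).map Polynomial.C), ?_, ?_⟩
  · simpa using Polynomial.natDegree_det_X_add_C_le M 1
  · intro t
    have : (ContinuousLinearMap.id ℝ (EuclideanSpace ℝ (Fin k)) + t • A).det =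
      (LinearMap.toMatrix b b ((ContinuousLinearMap.id ℝ (EuclideanSpace ℝ (Fin k)) + t • A : EuclideanSpace ℝ (Fin k) →L[ℝ] EuclideanSpace ℝ (Fin k)) : EuclideanSpace ℝ (Fin k) →ₗ[ℝ] _)).det := by
      rw [LinearMap.det_toMatrix]
    rw [this]
    have h2 : LinearMap.toMatrix b b ((ContinuousLinearMap.id ℝ (EuclideanSpace ℝ (Fin k)) + t • A : EuclideanSpace ℝ (Fin k) →L[ℝ] EuclideanSpace ℝ (Fin k)) : EuclideanSpace ℝ (Fin k) →ₗ[ℝ] _) = 1 + t • M := by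
      simp [M]
    rw [h2, ← Polynomial.coe_evalRingHom, RingHom.map_det]
    congr 1
    ext i j
    simp only [Polynomial.coe_evalRingHom, RingHom.mapMatrix_apply, Matrix.map_apply, Matrix.add_apply,
      Matrix.smul_apply, smul_eq_mul, Polynomial.eval_add, Polynomial.eval_mul, Polynomial.eval_X,
      Polynomial.eval_C]
    ring

theorem fixBanach {E : Type*} [NormedAddCommGroup E] [CompleteSpace E] (T : E → E) (δ : ℝ) (hδ : 0 ≤ δ)
    (h1 : ∀ x ∈ closedBall (0:E) δ, ∀ y ∈ closedBall (0:E) δ, ‖T x - T y‖ ≤ 1/2 * ‖x - y‖)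
    (h2 : ‖T 0‖ ≤ δ / 2) : ∃ x ∈ closedBall (0:E) δ, T x = x := by
  have h0 : (0:E) ∈ closedBall (0:E) δ := by simpa using hδ
  have hm : MapsTo T (closedBall (0:E) δ) (closedBall (0:E) δ) := by
    intro x hx
    have := h1 x hx 0 h0
    rw [mem_closedBall_zero_iff] at hx ⊢
    have h3 := norm_add_le (T x - T 0) (T 0)
    simp at h3 this
    linarith
  have hc : ContractingWith (1/2) (hm.restrict T _ _) := by
    refine ⟨by norm_num, LipschitzWith.of_dist_le_mul ?_⟩
    rintro ⟨x, hx⟩ ⟨y, hy⟩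
    have := h1 x hx y hy
    simpa [Subtype.dist_eq, dist_eq_norm] using this
  obtain ⟨y, hy, hf, _⟩ := ContractingWith.exists_fixedPoint' (isClosed_closedBall.isComplete) hm hc h0 (edist_ne_top _ _)
  exact ⟨y, hy, hf⟩

/-- small perturbation of identity on the unit ball -/
theorem volPert {k : ℕ} (g : EuclideanSpace ℝ (Fin k) → EuclideanSpace ℝ (Fin k))
    (hg : ContDiff ℝ 1 g) (h1 : ∀ x, ‖x‖ ≤ 1 → ‖x + g x‖ ≤ 1) (h2 : ∀ x, ‖x‖ = 1 → g x = 0) :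
    ∃ t0 > (0:ℝ), ∀ t ∈ Ioo 0 t0,
      ∫ x in closedBall (0 : EuclideanSpace ℝ (Fin k)) 1, (ContinuousLinearMap.id ℝ _ + t • fderiv ℝ g x).det
        = MeasureTheory.volume.real (closedBall (0 : EuclideanSpace ℝ (Fin k)) 1) := by
  have hgd : ∀ x, HasFDerivAt g (fderiv ℝ g x) x := fun x =>
    (hg.differentiable (by norm_num) x).hasFDerivAt
  have hgc : Continuous (fderiv ℝ g) := hg.continuous_fderiv (by norm_num)
  have hcomp : IsCompact (closedBall (0 : EuclideanSpace ℝ (Fin k)) 1) := isCompact_closedBall _ _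
  obtain ⟨C, hC⟩ := hcomp.exists_bound_of_continuousOn hgc.continuousOn
  have hC0 : 0 ≤ C := (norm_nonneg _).trans (hC 0 (by simp))
  have hlip : ∀ x, ‖x‖ ≤ 1 → ∀ y, ‖y‖ ≤ 1 → ‖g x - g y‖ ≤ C * ‖x - y‖ := by
    intro x hx y hy
    exact Convex.norm_image_sub_le_of_norm_hasFDerivWithin_le (fun z _ => (hgd z).hasFDerivWithinAt)
      hC (convex_closedBall _ _) (by simpa using hy) (by simpa using hx)
  classical
  let G : EuclideanSpace ℝ (Fin k) → EuclideanSpace ℝ (Fin k) := fun x => if ‖x‖ ≤ 1 then g x else 0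
  have hG1 : ∀ x, ‖x‖ ≤ 1 → ∀ y, ¬ ‖y‖ ≤ 1 → ‖g x‖ ≤ 2 * C * ‖x - y‖ := by
    intro x hx y hy
    push Not at hy
    have hy0 : 0 < ‖y‖ := by linarith
    have hn : ‖(‖y‖⁻¹ • y)‖ = 1 := by
      rw [norm_smul, norm_inv, norm_norm, inv_mul_cancel₀ hy0.ne']
    have e1 := hlip x hx _ hn.le
    rw [h2 _ hn, sub_zero] at e1
    have e2 : ‖y - ‖y‖⁻¹ • y‖ = ‖y‖ - 1 := by
      have : y - ‖y‖⁻¹ • y = (1 - ‖y‖⁻¹) • y := by rw [sub_smul, one_smul]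
      rw [this, norm_smul, Real.norm_of_nonneg (by
        have := inv_lt_one_of_one_lt₀ hy
        linarith), sub_mul, inv_mul_cancel₀ hy0.ne', one_mul]
    have e3 : ‖x - ‖y‖⁻¹ • y‖ ≤ ‖x - y‖ + (‖y‖ - 1) := by
      rw [← e2]
      simpa using norm_add_le (x - y) (y - ‖y‖⁻¹ • y)
    have e4 : ‖y‖ - ‖x‖ ≤ ‖x - y‖ := by
      rw [norm_sub_rev]; exact norm_sub_norm_le y x
    calc ‖g x‖ ≤ C * ‖x - ‖y‖⁻¹ • y‖ := e1
      _ ≤ C * (2 * ‖x - y‖) := by gcongr; linarith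
      _ = _ := by ring
  have hGlip : ∀ x y, ‖G x - G y‖ ≤ 2 * C * ‖x - y‖ := by
    intro x y
    by_cases hx : ‖x‖ ≤ 1 <;> by_cases hy : ‖y‖ ≤ 1
    · simp only [G, hx, hy, if_true]
      refine (hlip x hx y hy).trans ?_
      have := norm_nonneg (x - y)
      nlinarith [mul_nonneg hC0 this]
    · simpa only [G, hx, hy, if_true, if_false, sub_zero] using hG1 x hx y hy
    · simp only [G, hx, hy, if_true, if_false, zero_sub, norm_neg]
      rw [norm_sub_rev]; exact hG1 y hy x hx
    · simp only [G, hx, hy, if_false, sub_zero, norm_zero]; positivity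
  have hpos : ∀ᶠ t in 𝓝 (0:ℝ), ∀ x ∈ closedBall (0 : EuclideanSpace ℝ (Fin k)) 1,
      0 < (ContinuousLinearMap.id ℝ _ + t • fderiv ℝ g x).det := by
    refine hcomp.eventually_forall_of_forall_eventually ?_
    intro x _
    have hc : Continuous (fun p : ℝ × EuclideanSpace ℝ (Fin k) =>
      (ContinuousLinearMap.id ℝ _ + p.1 • fderiv ℝ g p.2).det) := by
      refine ContinuousLinearMap.continuous_det.comp ?_
      exact continuous_const.add (continuous_fst.smul (hgc.comp continuous_snd))
    have := hc.continuousAt (x := ((0:ℝ), x))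
    refine this.eventually (lt_mem_nhds ?_)
    have e : (ContinuousLinearMap.id ℝ (EuclideanSpace ℝ (Fin k)) + (0:ℝ) • fderiv ℝ g x).det = 1 := by
      have e0 : ContinuousLinearMap.id ℝ (EuclideanSpace ℝ (Fin k)) + (0:ℝ) • fderiv ℝ g x
        = ContinuousLinearMap.id ℝ (EuclideanSpace ℝ (Fin k)) := by ext; simp
      rw [e0]; exact LinearMap.det_id
    exact lt_of_lt_of_eq one_pos e.symm
  obtain ⟨t1, ht1, hpos⟩ := Metric.eventually_nhds_iff.1 hpos
  refine ⟨min (min t1 1) (1 / (4 * C + 1)), by positivity, ?_⟩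
  rintro t ⟨ht0, ht⟩
  have a1 : t < t1 := ht.trans_le ((min_le_left _ _).trans (min_le_left _ _))
  have a2 : t < 1 := ht.trans_le ((min_le_left _ _).trans (min_le_right _ _))
  have a3 : t < 1 / (4 * C + 1) := ht.trans_le (min_le_right _ _)
  have a4 : t * (2 * C) ≤ 1 / 2 := by
    rw [lt_div_iff₀ (by positivity)] at a3
    linarith
  have hinj : InjOn (fun x => x + t • g x) (closedBall (0 : EuclideanSpace ℝ (Fin k)) 1) := by
    intro x hx y hy hxy
    simp only at hxy
    have e := hlip x (by simpa using hx) y (by simpa using hy)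
    have e2 : x - y = t • (g y - g x) := by
      rw [smul_sub, sub_eq_sub_iff_add_eq_add]; rw [hxy]; abel
    have e3 : ‖x - y‖ = t * ‖g x - g y‖ := by
      rw [e2, norm_smul, Real.norm_of_nonneg ht0.le, norm_sub_rev]
    have e4 : ‖x - y‖ ≤ 0 := by
      have := mul_le_mul_of_nonneg_left e ht0.le
      have := norm_nonneg (x - y)
      nlinarith
    exact sub_eq_zero.1 (norm_le_zero_iff.1 e4)
  have himg : (fun x => x + t • g x) '' (closedBall (0 : EuclideanSpace ℝ (Fin k)) 1) = closedBall 0 1 := by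
    apply Subset.antisymm
    · rintro _ ⟨x, hx, rfl⟩
      rw [mem_closedBall_zero_iff] at hx ⊢
      have : x + t • g x = (1 - t) • x + t • (x + g x) := by
        rw [sub_smul, smul_add, one_smul]; abel
      simp only [this]
      refine (norm_add_le _ _).trans ?_
      rw [norm_smul, norm_smul, Real.norm_of_nonneg ht0.le, Real.norm_of_nonneg (by linarith : 0 ≤ 1 - t)]
      nlinarith [h1 x hx]
    · intro y hy
      rw [mem_closedBall_zero_iff] at hy
      obtain ⟨x, -, hx⟩ := fixBanach (fun x => y - t • G x) (2 * ‖y - t • G 0‖) (by positivity) (by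
        intro x _ z _
        have : y - t • G x - (y - t • G z) = t • (G z - G x) := by rw [smul_sub]; abel
        rw [this, norm_smul, Real.norm_of_nonneg ht0.le]
        have e := hGlip z x
        rw [norm_sub_rev z x] at e
        have := mul_le_mul_of_nonneg_left e ht0.le
        have := norm_nonneg (x - z)
        nlinarith) (by simp)
      by_cases hx1 : ‖x‖ ≤ 1
      · refine ⟨x, by simpa using hx1, ?_⟩
        simp only [G, hx1, if_true] at hx
        simp only
        nth_rewrite 1 [← hx]; abel
      · simp only [G, hx1, if_false] at hx
        simp at hx
        exact absurd (hx ▸ hy) hx1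
  have hint := MeasureTheory.integral_image_eq_integral_abs_det_fderiv_smul MeasureTheory.volume
    (s := closedBall (0 : EuclideanSpace ℝ (Fin k)) 1) measurableSet_closedBall
    (f := fun x => x + t • g x) (f' := fun x => ContinuousLinearMap.id ℝ _ + t • fderiv ℝ g x)
    (fun x _ => ((hasFDerivAt_id x).add ((hgd x).const_smul t)).hasFDerivWithinAt) hinj (fun _ => (1:ℝ))
  rw [himg] at hint
  simp only [smul_eq_mul, mul_one, MeasureTheory.integral_const, MeasureTheory.measureReal_restrict_apply_univ] at hint
  rw [hint]
  refine MeasureTheory.setIntegral_congr_fun measurableSet_closedBall ?_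
  intro x hx
  simp only
  rw [abs_of_pos]
  exact hpos (by simpa [abs_of_pos ht0] using a1) x hx

theorem noRetract {k : ℕ} (f : EuclideanSpace ℝ (Fin k) → EuclideanSpace ℝ (Fin k))
    (hf : ContDiff ℝ 1 f) (h1 : ∀ x, ‖f x‖ = 1) (h2 : ∀ x, ‖x‖ = 1 → f x = x) : False := by
  obtain ⟨t0, ht0, H⟩ := volPert (fun x => f x - x) (hf.sub contDiff_id) (by simp [h1])
    (fun x hx => by simp [h2 x hx])
  set A : EuclideanSpace ℝ (Fin k) → EuclideanSpace ℝ (Fin k) →L[ℝ] EuclideanSpace ℝ (Fin k) :=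
    fderiv ℝ (fun x => f x - x) with hA
  have hAc : Continuous A := (hf.sub contDiff_id).continuous_fderiv (by norm_num)
  obtain ⟨t, w, ht, hw, hq⟩ := polyWeights k t0 ht0
  have hfd : ∀ x, HasFDerivAt f (fderiv ℝ f x) x := fun x =>
    (hf.differentiable (by norm_num) x).hasFDerivAt
  have hA1 : ∀ x, ContinuousLinearMap.id ℝ _ + (1:ℝ) • A x = fderiv ℝ f x := by
    intro x
    have : A x = fderiv ℝ f x - ContinuousLinearMap.id ℝ _ :=
      ((hfd x).sub (hasFDerivAt_id x)).fderiv
    rw [this]; simp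
  have hdet0 : ∀ x, (fderiv ℝ f x).det = 0 := by
    intro x
    by_contra hne
    have hsurj : ∃ v, fderiv ℝ f x v = f x := by
      have hu : IsUnit ((fderiv ℝ f x : EuclideanSpace ℝ (Fin k) →ₗ[ℝ] EuclideanSpace ℝ (Fin k))) :=
        (LinearMap.isUnit_iff_isUnit_det _).2 (isUnit_iff_ne_zero.2 hne)
      exact ((Module.End.isUnit_iff _).1 hu).2 (f x)
    obtain ⟨v, hv⟩ := hsurj
    have d1 := (hfd x).norm_sq
    have d2 : HasFDerivAt (fun x => ‖f x‖ ^ 2) (0 : EuclideanSpace ℝ (Fin k) →L[ℝ] ℝ) x := by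
      simp only [h1]; exact hasFDerivAt_const _ _
    have d3 := congrArg (fun T => T v) (d1.unique d2)
    simp [hv, h1] at d3
  have hsum : ∀ x, (0:ℝ) = ∑ j, w j * (ContinuousLinearMap.id ℝ _ + t j • A x).det := by
    intro x
    obtain ⟨q, hqd, hqe⟩ := detPoly (A x)
    have := hq q hqd
    rw [hqe, hA1, hdet0] at this
    simpa only [hqe] using this
  have hI : (0:ℝ) = ∫ x in closedBall (0 : EuclideanSpace ℝ (Fin k)) 1,
      ∑ j, w j * (ContinuousLinearMap.id ℝ _ + t j • A x).det := by
    simp [← hsum]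
  rw [MeasureTheory.integral_finsetSum] at hI
  · simp_rw [MeasureTheory.integral_const_mul, H _ (ht _)] at hI
    rw [← Finset.sum_mul, hw, one_mul] at hI
    have : 0 < MeasureTheory.volume.real (closedBall (0 : EuclideanSpace ℝ (Fin k)) 1) :=
      ENNReal.toReal_pos (measure_closedBall_pos _ _ one_pos).ne' MeasureTheory.measure_closedBall_lt_top.ne
    linarith
  · intro j _
    have hc : Continuous (fun x => w j * (ContinuousLinearMap.id ℝ _ + t j • A x).det) :=
      continuous_const.mul (ContinuousLinearMap.continuous_det.comp
        (continuous_const.add (hAc.const_smul (t j))))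
    exact hc.continuousOn.integrableOn_compact (isCompact_closedBall _ _)

theorem smoothZero {k : ℕ} (ψ : EuclideanSpace ℝ (Fin k) → EuclideanSpace ℝ (Fin k))
    (hψ : ContDiff ℝ 1 ψ) (hid : ∀ x, 1 ≤ ‖x‖ → ψ x = x) : ∃ x, ψ x = 0 := by
  by_contra hne
  push Not at hne
  refine noRetract (fun x => ‖ψ x‖⁻¹ • ψ x) ?_ ?_ ?_
  · exact ((hψ.norm ℝ hne).inv (fun x => norm_ne_zero_iff.2 (hne x))).smul hψ
  · intro x
    rw [norm_smul, norm_inv, norm_norm, inv_mul_cancel₀ (norm_ne_zero_iff.2 (hne x))]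
  · intro x hx
    simp [hid x hx.ge, hx]

theorem fixedSmall {k : ℕ} (φ : EuclideanSpace ℝ (Fin k) → EuclideanSpace ℝ (Fin k))
    (hφ : Continuous φ) (hb : ∀ x, ‖φ x‖ ≤ 1/4) : ∃ x, φ x = x := by
  by_contra hne
  push Not at hne
  obtain ⟨x0, -, hx0⟩ := (isCompact_closedBall (0 : EuclideanSpace ℝ (Fin k)) 1).exists_isMinOn
    ⟨0, by simp⟩ (f := fun x => dist (φ x) x) (hφ.dist continuous_id).continuousOn
  have hδ : 0 < dist (φ x0) x0 := dist_pos.2 (hne x0)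
  obtain ⟨g, hg, hgd, -⟩ := hφ.exists_contDiff_approx 1 (ε := fun _ => min (dist (φ x0) x0) (1/4))
    continuous_const (fun _ => by positivity)
  let χ : ContDiffBump (0 : EuclideanSpace ℝ (Fin k)) := ⟨1/2, 1, by norm_num, by norm_num⟩
  obtain ⟨x, hx⟩ := smoothZero (fun x => x - χ x • g x) (contDiff_id.sub (χ.contDiff.smul hg)) (by
    intro x hx
    have : χ x = 0 := χ.zero_of_le_dist (by simpa [χ] using hx)
    simp [this])
  have hx' : x = χ x • g x := sub_eq_zero.1 hx
  have hgb : ‖g x‖ ≤ 1/2 := by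
    have := hgd x
    have h3 := this.trans_le (min_le_right _ _)
    rw [dist_eq_norm] at h3
    have h4 := norm_add_le (g x - φ x) (φ x)
    simp only [sub_add_cancel] at h4
    linarith [hb x]
  have hxn : ‖x‖ ≤ 1/2 := by
    rw [hx', norm_smul, Real.norm_of_nonneg χ.nonneg]
    have := χ.le_one (x := x)
    have := χ.nonneg (x := x)
    nlinarith [norm_nonneg (g x)]
  have : χ x = 1 := χ.one_of_mem_closedBall (by simpa [χ] using hxn)
  rw [this, one_smul] at hx'
  have h5 := (hgd x).trans_le (min_le_left _ _)
  have h6 : dist (φ x0) x0 ≤ dist (φ x) x := hx0 (by simp; linarith)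
  rw [← hx', dist_comm] at h5
  linarith

theorem brouwer {k : ℕ} (h0 : EuclideanSpace ℝ (Fin k)) (s : ℝ) (hs : 0 ≤ s)
    (φ : EuclideanSpace ℝ (Fin k) → EuclideanSpace ℝ (Fin k))
    (hφ : ContinuousOn φ (closedBall h0 s)) (hm : MapsTo φ (closedBall h0 s) (closedBall h0 s)) :
    ∃ x ∈ closedBall h0 s, φ x = x := by
  rcases hs.eq_or_lt with rfl | hs
  · refine ⟨h0, by simp, ?_⟩
    simpa using hm (x := h0) (by simp)
  let cl : EuclideanSpace ℝ (Fin k) → EuclideanSpace ℝ (Fin k) := fun z => (max 1 (‖z‖ / s))⁻¹ • z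
  have hcl : Continuous cl := by
    have hc : Continuous (fun z : EuclideanSpace ℝ (Fin k) => max 1 (‖z‖ / s)) := by fun_prop
    refine Continuous.smul (hc.inv₀ ?_) continuous_id
    intro x
    have : (1:ℝ) ≤ max 1 (‖x‖ / s) := le_max_left _ _
    positivity
  have hcl1 : ∀ z, h0 + cl z ∈ closedBall h0 s := by
    intro z
    rw [mem_closedBall, dist_eq_norm, add_sub_cancel_left, norm_smul, norm_inv,
      Real.norm_of_nonneg (by positivity), inv_mul_le_iff₀ (by positivity)]
    have := le_max_right 1 (‖z‖ / s)
    rw [div_le_iff₀ hs] at this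
    exact this
  have hcl2 : ∀ z, ‖z‖ ≤ s → cl z = z := by
    intro z hz
    have : max 1 (‖z‖ / s) = 1 := max_eq_left ((div_le_one hs).2 hz)
    simp [cl, this]
  obtain ⟨y, hy⟩ := fixedSmall (fun y => (4 * s)⁻¹ • (φ (h0 + cl ((4 * s) • y)) - h0)) (by
    have hc : Continuous (fun y => φ (h0 + cl ((4 * s) • y))) :=
      hφ.comp_continuous (by fun_prop) (fun y => hcl1 _)
    exact (hc.sub continuous_const).const_smul ((4 * s)⁻¹)) (by
    intro y
    have := hm (hcl1 ((4 * s) • y))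
    rw [mem_closedBall, dist_eq_norm] at this
    rw [norm_smul, norm_inv, Real.norm_of_nonneg (by positivity), inv_mul_le_iff₀ (by positivity)]
    linarith)
  have hy' : φ (h0 + cl ((4 * s) • y)) - h0 = (4 * s) • y := by
    conv_rhs => rw [← hy]
    rw [smul_smul, mul_inv_cancel₀ (by positivity), one_smul]
  have hn : ‖(4 * s) • y‖ ≤ s := by
    rw [← hy', ← dist_eq_norm]
    exact hm (hcl1 _)
  rw [hcl2 _ hn] at hy'
  refine ⟨h0 + (4 * s) • y, by simpa [dist_eq_norm] using hn, ?_⟩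
  exact sub_eq_iff_eq_add'.1 hy'

theorem memE2 {E : Type*} [NormedAddCommGroup E] [NormedSpace ℝ E] (p : E →L[ℝ] E)
    (hp : p.comp p = p) (x : E) :
    x ∈ range ⇑(ContinuousLinearMap.id ℝ E - p) ↔ p x = 0 := by
  have hpp : ∀ y, p (p y) = p y := fun y => congrArg (fun T : E →L[ℝ] E => T y) hp
  constructor
  · rintro ⟨y, rfl⟩
    simp [hpp]
  · intro h
    exact ⟨x, by simp [h]⟩

theorem exB {E : Type*} [NormedAddCommGroup E] [NormedSpace ℝ E] (p A R : E →L[ℝ] E)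
    (hp : p.comp p = p)
    (hR : (∀ x : E, R x ∈ range ⇑(ContinuousLinearMap.id ℝ E - p)) ∧
      (∀ x ∈ range ⇑(ContinuousLinearMap.id ℝ E - p),
        R ((ContinuousLinearMap.id ℝ E - p) (A x - x)) = x) ∧
      (∀ x ∈ range ⇑(ContinuousLinearMap.id ℝ E - p),
        (ContinuousLinearMap.id ℝ E - p) (A (R x) - R x) = x)) :
    ∃ B : E →L[ℝ] E, (∀ x, B x = 0 → x = 0) ∧
      ContinuousLinearMap.id ℝ E - B.comp ((ContinuousLinearMap.id ℝ E - p).comp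
        ((A - ContinuousLinearMap.id ℝ E).comp (ContinuousLinearMap.id ℝ E - p)) + p) = 0 := by
  have hpp : ∀ y, p (p y) = p y := fun y => congrArg (fun T : E →L[ℝ] E => T y) hp
  obtain ⟨h1, h2, h3⟩ := hR
  refine ⟨R.comp (ContinuousLinearMap.id ℝ E - p) + p, ?_, ?_⟩
  · intro x hx
    have e0 : p (R ((ContinuousLinearMap.id ℝ E - p) x)) = 0 := (memE2 p hp _).1 (h1 _)
    have e1 : R ((ContinuousLinearMap.id ℝ E - p) x) + p x = 0 := hx
    have e2 : p x = 0 := by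
      have := congrArg p e1
      rw [map_add, e0, hpp, zero_add, map_zero] at this
      exact this
    rw [e2, add_zero] at e1
    have := h3 _ ⟨x, rfl⟩
    rw [e1] at this
    simp [e2] at this
    exact this.symm
  · ext x
    have e := h2 _ ⟨x, rfl⟩
    have hq : ∀ y, (ContinuousLinearMap.id ℝ E - p) ((ContinuousLinearMap.id ℝ E - p) y)
        = (ContinuousLinearMap.id ℝ E - p) y := by
      intro y; simp [hpp]
    have hq2 : ∀ y, (ContinuousLinearMap.id ℝ E - p) (p y) = 0 := by intro y; simp [hpp]
    have hq3 : ∀ y, p ((ContinuousLinearMap.id ℝ E - p) y) = 0 := by intro y; simp [hpp]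
    have e' : (A - ContinuousLinearMap.id ℝ E) ((ContinuousLinearMap.id ℝ E - p) x) =
      A ((ContinuousLinearMap.id ℝ E - p) x) - (ContinuousLinearMap.id ℝ E - p) x := rfl
    set q := ContinuousLinearMap.id ℝ E - p with hqd
    have hx : q x = x - p x := rfl
    rw [_root_.sub_apply, ContinuousLinearMap.comp_apply, _root_.add_apply,
      _root_.add_apply, ContinuousLinearMap.comp_apply, ContinuousLinearMap.comp_apply,
      ContinuousLinearMap.comp_apply, map_add, map_add, map_add, hq, hq2, hq3, e', map_zero, add_zero,
      zero_add, e, hpp, hx]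
    simp

theorem exH {E : Type*} [NormedAddCommGroup E] [NormedSpace ℝ E] [CompleteSpace E]
    {k : ℕ} (h0 : EuclideanSpace ℝ (Fin k)) (r0 : ℝ) (hr0 : 0 < r0)
    (S : EuclideanSpace ℝ (Fin k) → E)
    (S' : EuclideanSpace ℝ (Fin k) → (EuclideanSpace ℝ (Fin k) →L[ℝ] E))
    (hS : ∀ h ∈ ball h0 r0, HasFDerivAt S (S' h) h)
    (hS'cont : ContinuousOn S' (ball h0 r0))
    (hA2 : Function.Injective ⇑(S' h0))
    (π1 : EuclideanSpace ℝ (Fin k) → E →L[ℝ] E)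
    (hproj : ∀ h ∈ ball h0 r0, (π1 h).comp (π1 h) = π1 h)
    (hrange : ∀ h ∈ ball h0 r0, range ⇑(π1 h) = range ⇑(S' h))
    (hπ1cont : ContinuousOn π1 (ball h0 r0)) :
    ∃ σ > (0:ℝ), ∃ C > (0:ℝ), ∀ ξ ∈ ball (S h0) σ, ∃ h, ‖h - h0‖ ≤ C * ‖ξ - S h0‖ ∧
      π1 h (ξ - S h) = 0 := by
  obtain ⟨J, hJ⟩ : ∃ J : E →L[ℝ] EuclideanSpace ℝ (Fin k), ∀ x, J (S' h0 x) = x :=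
    ContinuousLinearMap.HasLeftInverse.of_injective_of_isClosed_range_of_closedComplement_range hA2
      (by
        have := (LinearMap.range (S' h0 : EuclideanSpace ℝ (Fin k) →ₗ[ℝ] E)).closed_of_finiteDimensional
        exact this)
      (Submodule.ClosedComplemented.of_finiteDimensional _)
  have hb : ball h0 r0 ∈ 𝓝 h0 := ball_mem_nhds _ hr0
  have hh0 : h0 ∈ ball h0 r0 := mem_ball_self hr0
  have hπc : ContinuousAt π1 h0 := hπ1cont.continuousAt hb
  have hSc : ContinuousAt S' h0 := hS'cont.continuousAt hb
  have hπS : ∀ h ∈ ball h0 r0, ∀ a, π1 h (S' h a) = S' h a := by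
    intro h hh a
    obtain ⟨y, hy⟩ : S' h a ∈ range (π1 h) := by rw [hrange h hh]; exact ⟨a, rfl⟩
    rw [← hy]
    exact congrArg (fun T : E →L[ℝ] E => T y) (hproj h hh)
  have ev1 : ∀ᶠ h in 𝓝 h0, ‖ContinuousLinearMap.id ℝ (EuclideanSpace ℝ (Fin k)) - J.comp ((π1 h).comp (S' h0))‖ < 1/4 := by
    have hc : ContinuousAt (fun h => ‖ContinuousLinearMap.id ℝ (EuclideanSpace ℝ (Fin k)) - J.comp ((π1 h).comp (S' h0))‖) h0 := by
      refine (continuousAt_const.sub ?_).norm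
      exact continuousAt_const.clm_comp (hπc.clm_comp continuousAt_const)
    refine hc.eventually (gt_mem_nhds ?_)
    have : ContinuousLinearMap.id ℝ (EuclideanSpace ℝ (Fin k)) - J.comp ((π1 h0).comp (S' h0)) = 0 := by
      ext1 x
      simp [hπS h0 hh0, hJ]
    simp only
    rw [this]; simp
  have ev2 : ∀ᶠ h in 𝓝 h0, ‖ContinuousLinearMap.id ℝ (EuclideanSpace ℝ (Fin k)) - J.comp (S' h)‖ < 1/2 := by
    have hc : ContinuousAt (fun h => ‖ContinuousLinearMap.id ℝ (EuclideanSpace ℝ (Fin k)) - J.comp (S' h)‖) h0 :=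
      (continuousAt_const.sub (continuousAt_const.clm_comp hSc)).norm
    refine hc.eventually (gt_mem_nhds ?_)
    have : ContinuousLinearMap.id ℝ (EuclideanSpace ℝ (Fin k)) - J.comp (S' h0) = 0 := by
      ext1 x
      simp [hJ]
    simp only
    rw [this]; simp
  have ev3 : ∀ᶠ h in 𝓝 h0, ‖J.comp (π1 h)‖ < ‖J.comp (π1 h0)‖ + 1 := 
    (continuousAt_const.clm_comp hπc).norm.eventually (gt_mem_nhds (by linarith))
  set K := ‖J.comp (π1 h0)‖ + 1 with hK
  have hK0 : 0 < K := by positivity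
  have ev4 : ∀ᶠ h in 𝓝 h0, ‖S h - S h0 - S' h0 (h - h0)‖ ≤ 1 / (4 * K) * ‖h - h0‖ :=
    (hS h0 hh0).isLittleO.bound (by positivity)
  obtain ⟨s1, hs1, hev⟩ := Metric.eventually_nhds_iff.1 (((ev1.and ev2).and (ev3.and ev4)).and hb)
  refine ⟨s1 / (2 * K), by positivity, 2 * K, by positivity, ?_⟩
  intro ξ hξ
  rw [mem_ball, dist_eq_norm, lt_div_iff₀ (by positivity)] at hξ
  have hsub : ∀ h ∈ closedBall h0 (2 * K * ‖ξ - S h0‖), dist h h0 < s1 := by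
    intro h hh
    refine lt_of_le_of_lt (mem_closedBall.1 hh) ?_
    linarith
  obtain ⟨h, hh, hfix⟩ := brouwer h0 (2 * K * ‖ξ - S h0‖) (by positivity)
    (fun h => h - J (π1 h (S h - ξ))) (by
      intro h hh
      have hr := (hev (hsub h hh)).2
      have hn : ball h0 r0 ∈ 𝓝 h := isOpen_ball.mem_nhds hr
      have c1 : ContinuousAt π1 h := hπ1cont.continuousAt hn
      have c2 : ContinuousAt S h := (hS h hr).continuousAt
      refine ContinuousAt.continuousWithinAt ?_
      exact continuousAt_id.sub (J.continuous.continuousAt.comp (c1.clm_apply (c2.sub continuousAt_const))))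
    (by
      intro h hh
      obtain ⟨⟨⟨e1, -⟩, e3, e4⟩, hr⟩ := hev (hsub h hh)
      rw [mem_closedBall, dist_eq_norm] at hh ⊢
      have id1 : h - J (π1 h (S h - ξ)) - h0 =
        (ContinuousLinearMap.id ℝ (EuclideanSpace ℝ (Fin k)) - J.comp ((π1 h).comp (S' h0))) (h - h0)
          - (J.comp (π1 h)) (S h - S h0 - S' h0 (h - h0)) + (J.comp (π1 h)) (ξ - S h0) := by
        simp only [_root_.sub_apply, ContinuousLinearMap.comp_apply, map_sub,
          ContinuousLinearMap.id_apply]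
        abel
      simp only [id1]
      have n1 := ContinuousLinearMap.le_of_opNorm_le _ e1.le (h - h0)
      have n2 := ContinuousLinearMap.le_of_opNorm_le _ e3.le (S h - S h0 - S' h0 (h - h0))
      have n3 := ContinuousLinearMap.le_of_opNorm_le _ e3.le (ξ - S h0)
      have n4 : K * ‖S h - S h0 - S' h0 (h - h0)‖ ≤ 1/4 * ‖h - h0‖ := by
        calc _ ≤ K * (1 / (4 * K) * ‖h - h0‖) := by gcongr
          _ = _ := by field_simp
      refine (norm_add_le _ _).trans ?_
      have n5 := norm_sub_le ((ContinuousLinearMap.id ℝ (EuclideanSpace ℝ (Fin k)) - J.comp ((π1 h).comp (S' h0))) (h - h0))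
        ((J.comp (π1 h)) (S h - S h0 - S' h0 (h - h0)))
      linarith)
  obtain ⟨⟨⟨-, e2⟩, -, -⟩, hr⟩ := hev (hsub h hh)
  refine ⟨h, by rwa [mem_closedBall, dist_eq_norm] at hh, ?_⟩
  have hz : J (π1 h (S h - ξ)) = 0 := by simpa using hfix
  obtain ⟨a, ha⟩ : π1 h (S h - ξ) ∈ range (S' h) := by rw [← hrange h hr]; exact ⟨_, rfl⟩
  rw [← ha] at hz
  have n := ContinuousLinearMap.le_of_opNorm_le _ e2.le a
  simp only [_root_.sub_apply, ContinuousLinearMap.comp_apply, hz, sub_zero,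
    ContinuousLinearMap.id_apply] at n
  have ha0 : a = 0 := norm_le_zero_iff.1 (by linarith [norm_nonneg a])
  rw [ha0, map_zero] at ha
  rw [← neg_sub, map_neg, ← ha, neg_zero]

set_option maxHeartbeats 4000000 in
theorem stmt1
    {E : Type*} [NormedAddCommGroup E] [NormedSpace ℝ E] [CompleteSpace E]
    {k : ℕ} (hk : 1 ≤ k)
    (P : E → E) (P' : E → E →L[ℝ] E)
    (hP : ∀ x, HasFDerivAt P (P' x) x) (hP'cont : Continuous P')
    (Q : E → ℝ → E)
    (hQcont : ContinuousOn (fun p : E × ℝ => Q p.1 p.2) (univ ×ˢ Icc (0:ℝ) 1))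
    (hQlip : ∀ R > (0:ℝ), ∃ L > (0:ℝ), ∀ ε ∈ Icc (0:ℝ) 1, ∀ ξ₁ ξ₂ : E,
      ‖ξ₁‖ ≤ R → ‖ξ₂‖ ≤ R → ‖Q ξ₁ ε - Q ξ₂ ε‖ ≤ L * ‖ξ₁ - ξ₂‖)
    -- (A1)
    (h0 : EuclideanSpace ℝ (Fin k)) (r0 : ℝ) (hr0 : 0 < r0)
    (S : EuclideanSpace ℝ (Fin k) → E)
    (S' : EuclideanSpace ℝ (Fin k) → (EuclideanSpace ℝ (Fin k) →L[ℝ] E))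
    (hS : ∀ h ∈ ball h0 r0, HasFDerivAt S (S' h) h)
    (hS'cont : ContinuousOn S' (ball h0 r0))
    (hA1 : ∀ h ∈ ball h0 r0, P (S h) = S h)
    -- (A2)
    (hA2 : Function.Injective ⇑(S' h0))
    -- (A3)
    (π1 : EuclideanSpace ℝ (Fin k) → E →L[ℝ] E)
    (hproj : ∀ h ∈ ball h0 r0, (π1 h).comp (π1 h) = π1 h)
    (hrange : ∀ h ∈ ball h0 r0, range ⇑(π1 h) = range ⇑(S' h))
    (hπ1cont : ContinuousOn π1 (ball h0 r0))
    -- (A4) together with the local inverses R h and Sinv h on a small ball around h0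
    (ρ : ℝ) (hρ : 0 < ρ) (hρ0 : ρ ≤ r0)
    (R : EuclideanSpace ℝ (Fin k) → (E →L[ℝ] E))
    (hR : ∀ h ∈ ball h0 ρ,
      (∀ x : E, R h x ∈ range ⇑(ContinuousLinearMap.id ℝ E - π1 h)) ∧
      (∀ x ∈ range ⇑(ContinuousLinearMap.id ℝ E - π1 h),
        R h ((ContinuousLinearMap.id ℝ E - π1 h) ((P' (S h)) x - x)) = x) ∧
      (∀ x ∈ range ⇑(ContinuousLinearMap.id ℝ E - π1 h),
        (ContinuousLinearMap.id ℝ E - π1 h) ((P' (S h)) (R h x) - R h x) = x))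
    (Sinv : EuclideanSpace ℝ (Fin k) → E → EuclideanSpace ℝ (Fin k))
    (hSinv : ∀ h ∈ ball h0 ρ, ∀ a, Sinv h (S' h a) = a) :
    ∃ r1 r2 : ℝ, 0 < r2 ∧ r2 < r1 ∧ r1 < r0 ∧ r1 ≤ ρ ∧
    ∃ M > (0:ℝ), ∃ H : E → EuclideanSpace ℝ (Fin k), ∃ β : EuclideanSpace ℝ (Fin k) → ℝ → E,
      -- H(ξ) → h0 as ξ → ξ0
      Tendsto H (𝓝 (S h0)) (𝓝 h0) ∧
      -- β(·,ε) continuous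
      (∀ ε ∈ Icc (0:ℝ) r1, ContinuousOn (fun h => β h ε) (ball h0 r1)) ∧
      -- β(h,ε) ∈ E_{2,h} and ‖β(h,ε)‖ ≤ M ε
      (∀ h ∈ ball h0 r1, ∀ ε ∈ Icc (0:ℝ) r1,
        β h ε ∈ range ⇑(ContinuousLinearMap.id ℝ E - π1 h) ∧ ‖β h ε‖ ≤ M * ε) ∧
      -- β(h,ε)/ε → −R_h π_{2,h} Q(S(h),0) as ε → 0+, uniformly in h
      TendstoUniformlyOn (fun ε h => ε⁻¹ • β h ε)
        (fun h => -(R h ((ContinuousLinearMap.id ℝ E - π1 h) (Q (S h) 0))))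
        (𝓝[>] (0:ℝ)) (ball h0 r1) ∧
      -- (1) every solution of F(ξ,ε) = 0 near (ξ0,0) yields a solution h = H(ξ) of the
      -- reduced equation
      (∀ ξ ∈ ball (S h0) r2, ∀ ε ∈ Icc (0:ℝ) r2,
        P ξ - ξ + ε • Q ξ ε = 0 →
        H ξ ∈ ball h0 r1 ∧
        Sinv (H ξ) (π1 (H ξ)
          (P (β (H ξ) ε + S (H ξ)) - (β (H ξ) ε + S (H ξ)) +
            ε • Q (β (H ξ) ε + S (H ξ)) ε)) = 0) ∧
      -- (2) every solution (h,ε) of the reduced equation yields a solution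
      -- ξ = β(h,ε) + S(h) of F(ξ,ε) = 0
      (∀ h ∈ ball h0 r1, ∀ ε ∈ Icc (0:ℝ) r1,
        Sinv h (π1 h (P (β h ε + S h) - (β h ε + S h) + ε • Q (β h ε + S h) ε)) = 0 →
        P (β h ε + S h) - (β h ε + S h) + ε • Q (β h ε + S h) ε = 0) := by
  have _ := hk
  have hb : ball h0 r0 ∈ 𝓝 h0 := ball_mem_nhds _ hr0
  have hh0 : h0 ∈ ball h0 r0 := mem_ball_self hr0
  have hπc : ContinuousAt π1 h0 := hπ1cont.continuousAt hb
  have hSc : ContinuousAt S h0 := (hS h0 hh0).continuousAt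
  obtain ⟨σ, hσ, C, hC, hH⟩ := exH h0 r0 hr0 S S' hS hS'cont hA2 π1 hproj hrange hπ1cont
  obtain ⟨B, hBinj, hB⟩ := exB (π1 h0) (P' (S h0)) (R h0) (hproj h0 hh0) (hR h0 (mem_ball_self hρ))
  set p2 : EuclideanSpace ℝ (Fin k) → E →L[ℝ] E := fun h => ContinuousLinearMap.id ℝ E - π1 h with hp2
  have hp2c : ContinuousAt p2 h0 := continuousAt_const.sub hπc
  -- the derivative of the smooth part
  set D : EuclideanSpace ℝ (Fin k) → E → E →L[ℝ] E := fun h b =>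
    ContinuousLinearMap.id ℝ E - B.comp ((p2 h).comp
        ((P' (p2 h b + S h) - ContinuousLinearMap.id ℝ E).comp (p2 h)) + π1 h) with hD
  have evD : ∀ᶠ z in 𝓝 (h0, (0:E)), ‖D z.1 z.2‖ < 1/4 := by
    have c1 : ContinuousAt (fun z : EuclideanSpace ℝ (Fin k) × E => p2 z.1) (h0, 0) :=
      ContinuousAt.comp (f := Prod.fst) (g := p2) hp2c continuousAt_fst
    have c2 : ContinuousAt (fun z : EuclideanSpace ℝ (Fin k) × E => π1 z.1) (h0, 0) :=
      ContinuousAt.comp (f := Prod.fst) (g := π1) hπc continuousAt_fst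
    have c3 : ContinuousAt (fun z : EuclideanSpace ℝ (Fin k) × E => S z.1) (h0, 0) :=
      ContinuousAt.comp (f := Prod.fst) (g := S) hSc continuousAt_fst
    have c4 : ContinuousAt (fun z : EuclideanSpace ℝ (Fin k) × E => p2 z.1 z.2 + S z.1) (h0, 0) :=
      (c1.clm_apply continuousAt_snd).add c3
    have c5 : ContinuousAt (fun z : EuclideanSpace ℝ (Fin k) × E => P' (p2 z.1 z.2 + S z.1)) (h0, 0) :=
      ContinuousAt.comp (f := fun z : EuclideanSpace ℝ (Fin k) × E => p2 z.1 z.2 + S z.1) (g := P')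
        hP'cont.continuousAt c4
    have hc : ContinuousAt (fun z : EuclideanSpace ℝ (Fin k) × E => ‖D z.1 z.2‖) (h0, 0) :=
      (continuousAt_const.sub (continuousAt_const.clm_comp
        ((c1.clm_comp ((c5.sub continuousAt_const).clm_comp c1)).add c2))).norm
    refine hc.eventually (gt_mem_nhds ?_)
    have : D h0 0 = 0 := by
      simp only [hD, map_zero, zero_add]; exact hB
    simp only [this]; simp
  obtain ⟨s1, hs1, hD1⟩ := Metric.eventually_nhds_iff.1 evD
  have evQ : ∀ᶠ z in 𝓝 (h0, (0:ℝ)), z.2 ∈ Icc (0:ℝ) 1 → ‖Q (S z.1) z.2‖ < ‖Q (S h0) 0‖ + 1 := by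
    have c0 : ContinuousWithinAt (fun p : E × ℝ => Q p.1 p.2) (univ ×ˢ Icc (0:ℝ) 1) (S h0, 0) :=
      hQcont _ (by simp)
    have c3 : ContinuousAt (fun z : EuclideanSpace ℝ (Fin k) × ℝ => (S z.1, z.2)) (h0, 0) :=
      (ContinuousAt.comp (f := Prod.fst) (g := S) hSc continuousAt_fst).prodMk continuousAt_snd
    have c4 : ContinuousWithinAt (fun z : EuclideanSpace ℝ (Fin k) × ℝ => Q (S z.1) z.2)
        {z | z.2 ∈ Icc (0:ℝ) 1} (h0, 0) :=
      ContinuousWithinAt.comp (g := fun p : E × ℝ => Q p.1 p.2)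
        (f := fun z : EuclideanSpace ℝ (Fin k) × ℝ => (S z.1, z.2)) c0 c3.continuousWithinAt
        (fun z hz => ⟨mem_univ _, hz⟩)
    have := c4.norm.eventually (gt_mem_nhds (show ‖Q (S h0) 0‖ < ‖Q (S h0) 0‖ + 1 by linarith))
    exact eventually_nhdsWithin_iff.1 this
  obtain ⟨s2, hs2, hQ2⟩ := Metric.eventually_nhds_iff.1 evQ
  have evp : ∀ᶠ h in 𝓝 h0, ‖p2 h‖ < ‖p2 h0‖ + 1 :=
    hp2c.norm.eventually (gt_mem_nhds (by linarith))
  have evS : ∀ᶠ h in 𝓝 h0, ‖S h‖ < ‖S h0‖ + 1 :=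
    hSc.norm.eventually (gt_mem_nhds (by linarith))
  obtain ⟨s3, hs3, hpS⟩ := Metric.eventually_nhds_iff.1 (evp.and evS)
  obtain ⟨K, hK1, hKp, hKS, hKQ, hKB⟩ : ∃ K : ℝ, 1 ≤ K ∧ ‖p2 h0‖ + 1 ≤ K ∧ ‖S h0‖ + 1 ≤ K ∧
      ‖Q (S h0) 0‖ + 1 ≤ K ∧ ‖B‖ ≤ K := by
    refine ⟨‖p2 h0‖ + ‖S h0‖ + ‖Q (S h0) 0‖ + ‖B‖ + 1, ?_, ?_, ?_, ?_, ?_⟩ <;>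
    linarith [norm_nonneg (p2 h0), norm_nonneg (S h0), norm_nonneg (Q (S h0) 0), norm_nonneg B]
  have hK0 : 0 < K := by linarith
  set δ : ℝ := s1 / 2 with hδ
  have hδ0 : 0 < δ := by positivity
  obtain ⟨L, hL, hQL⟩ := hQlip (K * δ + K) (by positivity)
  -- choice of r1
  obtain ⟨r1, hr1, hr1s1, hr1s2, hr1s3, hr1r0, hr1ρ, hr11, hr1L, hr1K⟩ : ∃ r1 : ℝ, 0 < r1 ∧ r1 < s1 ∧
      r1 < s2 ∧ r1 < s3 ∧ r1 < r0 ∧ r1 < ρ ∧ r1 < 1 ∧ r1 < 1 / (4 * K ^ 3 * L) ∧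
      r1 < δ / (2 * K ^ 3) := by
    have : ∀ᶠ r in 𝓝[>] (0:ℝ), 0 < r ∧ r < s1 ∧
      r < s2 ∧ r < s3 ∧ r < r0 ∧ r < ρ ∧ r < 1 ∧ r < 1 / (4 * K ^ 3 * L) ∧
      r < δ / (2 * K ^ 3) := by
      have lt : ∀ a : ℝ, 0 < a → ∀ᶠ r in 𝓝[>] (0:ℝ), r < a := fun a ha =>
        mem_nhdsWithin_of_mem_nhds (gt_mem_nhds ha)
      filter_upwards [self_mem_nhdsWithin, lt s1 hs1, lt s2 hs2, lt s3 hs3, lt r0 hr0, lt ρ hρ,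
        lt 1 one_pos, lt (1 / (4 * K ^ 3 * L)) (by positivity), lt (δ / (2 * K ^ 3)) (by positivity)]
        with r a1 a2 a3 a4 a5 a6 a7 a8 a9
      exact ⟨a1, a2, a3, a4, a5, a6, a7, a8, a9⟩
    exact this.exists
  rw [lt_div_iff₀ (by positivity)] at hr1L hr1K
  -- facts on the ball
  have fr0 : ∀ h ∈ closedBall h0 r1, h ∈ ball h0 r0 := fun h hh =>
    closedBall_subset_ball hr1r0 hh
  have fρ : ∀ h ∈ closedBall h0 r1, h ∈ ball h0 ρ := fun h hh =>
    closedBall_subset_ball hr1ρ hh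
  have fp : ∀ h ∈ closedBall h0 r1, ‖p2 h‖ ≤ K := fun h hh =>
    ((hpS (lt_of_le_of_lt hh hr1s3)).1.le).trans hKp
  have fS : ∀ h ∈ closedBall h0 r1, ‖S h‖ ≤ K := fun h hh =>
    ((hpS (lt_of_le_of_lt hh hr1s3)).2.le).trans hKS
  have fε : ∀ ε ∈ Icc (0:ℝ) r1, ε ∈ Icc (0:ℝ) 1 := fun ε hε => ⟨hε.1, hε.2.trans hr11.le⟩
  have fQ : ∀ h ∈ closedBall h0 r1, ∀ ε ∈ Icc (0:ℝ) r1, ‖Q (S h) ε‖ ≤ K := by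
    intro h hh ε hε
    refine (hQ2 (y := (h, ε)) ?_ (fε ε hε)).le.trans hKQ
    rw [Prod.dist_eq, max_lt_iff]
    refine ⟨lt_of_le_of_lt hh hr1s2, ?_⟩
    simp only [Real.dist_eq, sub_zero, abs_of_nonneg hε.1]
    exact lt_of_le_of_lt hε.2 hr1s2
  have fD : ∀ h ∈ closedBall h0 r1, ∀ b ∈ closedBall (0:E) δ, ‖D h b‖ ≤ 1/4 := by
    intro h hh b hb
    refine (hD1 (y := (h, b)) ?_).le
    rw [Prod.dist_eq, max_lt_iff]
    refine ⟨lt_of_le_of_lt hh hr1s1, lt_of_le_of_lt hb ?_⟩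
    rw [hδ]; linarith
  have fpp : ∀ h ∈ closedBall h0 r1, ∀ x, π1 h (π1 h x) = π1 h x := fun h hh x =>
    congrArg (fun T : E →L[ℝ] E => T x) (hproj h (fr0 h hh))
  have fp2 : ∀ h x, p2 h x = x - π1 h x := fun h x => rfl
  have fin : ∀ h ∈ closedBall h0 r1, ∀ x ∈ closedBall (0:E) δ, ‖p2 h x + S h‖ ≤ K * δ + K := by
    intro h hh x hx
    rw [mem_closedBall_zero_iff] at hx
    refine (norm_add_le _ _).trans (add_le_add ?_ (fS h hh))
    exact (ContinuousLinearMap.le_of_opNorm_le _ (fp h hh) x).trans (by gcongr)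
  set F : E → ℝ → E := fun ξ ε => P ξ - ξ + ε • Q ξ ε with hF
  set T : EuclideanSpace ℝ (Fin k) → ℝ → E → E := fun h ε b =>
    b - B (p2 h (F (p2 h b + S h) ε) + π1 h b) with hT
  have hBK : ∀ x, ‖B x‖ ≤ K * ‖x‖ := fun x => ContinuousLinearMap.le_of_opNorm_le _ hKB x
  -- contraction
  have hcontr : ∀ h ∈ closedBall h0 r1, ∀ ε ∈ Icc (0:ℝ) r1, ∀ x ∈ closedBall (0:E) δ,
      ∀ y ∈ closedBall (0:E) δ, ‖T h ε x - T h ε y‖ ≤ 1/2 * ‖x - y‖ := by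
    intro h hh ε hε x hx y hy
    set g : E → E := fun b => b - B (p2 h (P (p2 h b + S h) - (p2 h b + S h)) + π1 h b) with hg
    have gd : ∀ b, HasFDerivAt g (D h b) b := by
      intro b
      have d1 : HasFDerivAt (fun b => p2 h b + S h) (p2 h) b := (p2 h).hasFDerivAt.add_const _
      have d2 : HasFDerivAt (fun b => P (p2 h b + S h)) ((P' (p2 h b + S h)).comp (p2 h)) b :=
        HasFDerivAt.comp b (hP _) d1
      have d3 : HasFDerivAt (fun b => P (p2 h b + S h) - (p2 h b + S h))
        ((P' (p2 h b + S h) - ContinuousLinearMap.id ℝ E).comp (p2 h)) b := d2.sub d1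
      have d4 := ((p2 h).hasFDerivAt (x := P (p2 h b + S h) - (p2 h b + S h))).comp b d3
      have d5 := d4.add ((π1 h).hasFDerivAt (x := b))
      exact (hasFDerivAt_id b).sub ((B.hasFDerivAt).comp b d5)
    have m1 : ‖g x - g y‖ ≤ 1/4 * ‖x - y‖ :=
      Convex.norm_image_sub_le_of_norm_hasFDerivWithin_le (fun z _ => (gd z).hasFDerivWithinAt)
        (fun z hz => fD h hh z hz) (convex_closedBall _ _) hy hx
    have e : T h ε x - T h ε y = (g x - g y) -
        B (p2 h (ε • (Q (p2 h x + S h) ε - Q (p2 h y + S h) ε))) := by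
      simp only [hT, hg, hF, map_add, map_sub, smul_sub]
      abel
    have m2 : ‖Q (p2 h x + S h) ε - Q (p2 h y + S h) ε‖ ≤ L * (K * ‖x - y‖) := by
      refine (hQL ε (fε ε hε) _ _ (fin h hh x hx) (fin h hh y hy)).trans ?_
      rw [add_sub_add_right_eq_sub, ← map_sub]
      gcongr
      exact ContinuousLinearMap.le_of_opNorm_le _ (fp h hh) _
    have m3 : ‖B (p2 h (ε • (Q (p2 h x + S h) ε - Q (p2 h y + S h) ε)))‖ ≤ 1/4 * ‖x - y‖ := by
      calc _ ≤ K * ‖p2 h (ε • (Q (p2 h x + S h) ε - Q (p2 h y + S h) ε))‖ := hBK _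
        _ ≤ K * (K * ‖ε • (Q (p2 h x + S h) ε - Q (p2 h y + S h) ε)‖) := by
          gcongr
          exact ContinuousLinearMap.le_of_opNorm_le _ (fp h hh) _
        _ ≤ K * (K * (r1 * (L * (K * ‖x - y‖)))) := by
          rw [norm_smul, Real.norm_of_nonneg hε.1]
          have := hε.2
          gcongr
        _ = (r1 * (4 * K ^ 3 * L)) * (1/4 * ‖x - y‖) := by ring
        _ ≤ 1 * (1/4 * ‖x - y‖) := by gcongr
        _ = _ := one_mul _
    rw [e]
    refine (norm_sub_le _ _).trans ?_
    linarith
  have hT0 : ∀ h ∈ closedBall h0 r1, ∀ ε ∈ Icc (0:ℝ) r1, ‖T h ε 0‖ ≤ K ^ 3 * ε := by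
    intro h hh ε hε
    have : T h ε 0 = - B (p2 h (ε • Q (S h) ε)) := by
      simp only [hT, hF, map_zero, zero_add, hA1 h (fr0 h hh), sub_self, add_zero, zero_sub]
    rw [this, norm_neg]
    calc _ ≤ K * ‖p2 h (ε • Q (S h) ε)‖ := hBK _
      _ ≤ K * (K * ‖ε • Q (S h) ε‖) := by
          gcongr
          exact ContinuousLinearMap.le_of_opNorm_le _ (fp h hh) _
      _ ≤ K * (K * (ε * K)) := by
          rw [norm_smul, Real.norm_of_nonneg hε.1]
          have := hε.1
          have := fQ h hh ε hε
          gcongr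
      _ = _ := by ring
  have hfix : ∀ h ε, ∃ b : E, (h ∈ closedBall h0 r1 ∧ ε ∈ Icc (0:ℝ) r1) →
      b ∈ closedBall (0:E) δ ∧ T h ε b = b := by
    intro h ε
    by_cases hc : h ∈ closedBall h0 r1 ∧ ε ∈ Icc (0:ℝ) r1
    · obtain ⟨b, hb1, hb2⟩ := fixBanach (T h ε) δ hδ0.le (hcontr h hc.1 ε hc.2) (by
        refine (hT0 h hc.1 ε hc.2).trans ?_
        have : K ^ 3 * ε ≤ K ^ 3 * r1 := by
          have := hc.2.2
          gcongr
        linarith)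
      exact ⟨b, fun _ => ⟨hb1, hb2⟩⟩
    · exact ⟨0, fun h => absurd h hc⟩
  choose β hβ using hfix
  -- characterization of zeros
  have hzero : ∀ h ∈ closedBall h0 r1, ∀ ε ∈ Icc (0:ℝ) r1,
      π1 h (β h ε) = 0 ∧ p2 h (F (β h ε + S h) ε) = 0 := by
    intro h hh ε hε
    have e := (hβ h ε ⟨hh, hε⟩).2
    have e1 := hBinj _ (sub_eq_self.1 e)
    have e2 : π1 h (β h ε) = 0 := by
      have := congrArg (π1 h) e1
      rwa [map_add, fpp h hh, fp2, map_sub, fpp h hh, sub_self, zero_add, map_zero] at this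
    have e3 : p2 h (β h ε) = β h ε := by rw [fp2, e2, sub_zero]
    rw [e2, add_zero, e3] at e1
    exact ⟨e2, e1⟩
  have huniq : ∀ h ∈ closedBall h0 r1, ∀ ε ∈ Icc (0:ℝ) r1, ∀ b ∈ closedBall (0:E) δ,
      π1 h b = 0 → F (b + S h) ε = 0 → b = β h ε := by
    intro h hh ε hε b hb e1 e2
    have e3 : p2 h b = b := by rw [fp2, e1, sub_zero]
    have e4 : T h ε b = b := by
      simp only [hT, e3, e1, e2, map_zero, add_zero, sub_zero]
    have := hcontr h hh ε hε b hb _ (hβ h ε ⟨hh, hε⟩).1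
    rw [e4, (hβ h ε ⟨hh, hε⟩).2] at this
    exact sub_eq_zero.1 (norm_le_zero_iff.1 (by linarith [norm_nonneg (b - β h ε)]))
  set M : ℝ := 2 * K ^ 3 with hM
  have hM0 : 0 < M := by positivity
  have hβM : ∀ h ∈ closedBall h0 r1, ∀ ε ∈ Icc (0:ℝ) r1, ‖β h ε‖ ≤ M * ε := by
    intro h hh ε hε
    have e1 := hcontr h hh ε hε _ (hβ h ε ⟨hh, hε⟩).1 0 (by simpa using hδ0.le)
    rw [(hβ h ε ⟨hh, hε⟩).2, sub_zero] at e1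
    have e2 := norm_add_le (β h ε - T h ε 0) (T h ε 0)
    rw [sub_add_cancel] at e2
    have e3 := hT0 h hh ε hε
    rw [hM]; linarith
  have hsub : ball h0 r1 ⊆ closedBall h0 r1 := ball_subset_closedBall
  -- bound for R
  have hRb : ∀ h ∈ closedBall h0 r1, ∀ z, ‖R h (p2 h z)‖ ≤ 2 * K ^ 2 * ‖z‖ := by
    intro h hh z
    obtain ⟨a1, a2, a3⟩ := hR h (fρ h hh)
    have e1 := a3 _ ⟨z, rfl⟩
    have e2 := (memE2 _ (hproj h (fr0 h hh)) _).1 (a1 (p2 h z))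
    set x := R h (p2 h z) with hx
    have e3 : p2 h x = x := by rw [fp2, e2, sub_zero]
    have e4 : D h 0 x = x - B (p2 h z) := by
      have : D h 0 x = x - B (p2 h (P' (p2 h 0 + S h) (p2 h x) - p2 h x) + π1 h x) := rfl
      rw [this, e3, e2, map_zero, zero_add, add_zero]
      congr 2
    have e5 := ContinuousLinearMap.le_of_opNorm_le _ (fD h hh 0 (by simpa using hδ0.le)) x
    rw [e4] at e5
    have e6 : ‖B (p2 h z)‖ ≤ K * (K * ‖z‖) := by
      refine (hBK _).trans ?_
      gcongr
      exact ContinuousLinearMap.le_of_opNorm_le _ (fp h hh) _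
    have e7 := norm_add_le (x - B (p2 h z)) (B (p2 h z))
    rw [sub_add_cancel] at e7
    have := norm_nonneg x
    nlinarith [mul_nonneg (sq_nonneg K) (norm_nonneg z)]
  -- choice of H
  have hH' : ∀ ξ, ∃ h, ξ ∈ ball (S h0) σ → ‖h - h0‖ ≤ C * ‖ξ - S h0‖ ∧ π1 h (ξ - S h) = 0 := by
    intro ξ
    by_cases hc : ξ ∈ ball (S h0) σ
    · obtain ⟨h, hh⟩ := hH ξ hc
      exact ⟨h, fun _ => hh⟩
    · exact ⟨h0, fun h => absurd h hc⟩
  choose H hHp using hH'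
  have hHt : Tendsto H (𝓝 (S h0)) (𝓝 h0) := by
    rw [tendsto_iff_norm_sub_tendsto_zero]
    refine squeeze_zero' (Eventually.of_forall fun _ => norm_nonneg _)
      (g := fun ξ => C * ‖ξ - S h0‖) ?_ ?_
    · filter_upwards [ball_mem_nhds (S h0) hσ] with ξ hξ using (hHp ξ hξ).1
    · have : Continuous (fun ξ => C * ‖ξ - S h0‖) := by fun_prop
      simpa using this.tendsto (S h0)
  have evr2 : ∀ᶠ ξ in 𝓝 (S h0), ξ ∈ ball (S h0) σ ∧ H ξ ∈ ball h0 r1 ∧ ‖ξ - S (H ξ)‖ < δ := by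
    have q1 : ∀ᶠ ξ in 𝓝 (S h0), ξ ∈ ball (S h0) σ := ball_mem_nhds _ hσ
    have q2 : ∀ᶠ ξ in 𝓝 (S h0), H ξ ∈ ball h0 r1 := hHt (ball_mem_nhds h0 hr1)
    have this : Tendsto (fun ξ => ‖ξ - S (H ξ)‖) (𝓝 (S h0)) (𝓝 ‖S h0 - S h0‖) :=
      (tendsto_id.sub (hSc.tendsto.comp hHt)).norm
    have q3 : ∀ᶠ ξ in 𝓝 (S h0), ‖ξ - S (H ξ)‖ < δ :=
      this.eventually (gt_mem_nhds (by simpa using hδ0))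
    exact q1.and (q2.and q3)
  obtain ⟨r2', hr2', hr2p⟩ := Metric.eventually_nhds_iff.1 evr2
  refine ⟨r1, min (r1 / 2) r2', by positivity, (min_le_left _ _).trans_lt (by linarith), hr1r0, hr1ρ.le,
    M, hM0, H, β, hHt, ?_, ?_, ?_, ?_, ?_⟩
  · -- continuity
    intro ε hε h hh
    have hn : ball h0 r0 ∈ 𝓝 h := isOpen_ball.mem_nhds (fr0 h (hsub hh))
    have c1 : ContinuousAt π1 h := hπ1cont.continuousAt hn
    have c2 : ContinuousAt S h := (hS h (fr0 h (hsub hh))).continuousAt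
    have c3 : ContinuousAt p2 h := continuousAt_const.sub c1
    have c4 : ContinuousAt (fun h' => p2 h' (β h ε) + S h') h :=
      (c3.clm_apply continuousAt_const).add c2
    have cF : Continuous (fun ξ => F ξ ε) := by
      have cP : Continuous P := continuous_iff_continuousAt.2 fun x => (hP x).continuousAt
      have cQ : Continuous (fun ξ => Q ξ ε) :=
        hQcont.comp_continuous (f := fun ξ : E => (ξ, ε)) (by fun_prop)
          (fun ξ => ⟨mem_univ _, fε ε hε⟩)
      exact (cP.sub continuous_id).add (cQ.const_smul ε)
    have c5 : ContinuousAt (fun h' => F (p2 h' (β h ε) + S h') ε) h :=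
      ContinuousAt.comp (g := fun ξ => F ξ ε) (f := fun h' => p2 h' (β h ε) + S h')
        cF.continuousAt c4
    have c6 : ContinuousAt (fun h' => T h' ε (β h ε)) h := 
      continuousAt_const.sub (B.continuous.continuousAt.comp
        ((c3.clm_apply c5).add (c1.clm_apply continuousAt_const)))
    have c7 : Tendsto (fun h' => 2 * ‖T h' ε (β h ε) - β h ε‖) (𝓝 h) (𝓝 0) := by
      have := ((c6.sub (continuousAt_const (y := β h ε))).norm.const_mul 2).tendsto
      simpa [(hβ h ε ⟨hsub hh, hε⟩).2] using this
    refine ContinuousAt.continuousWithinAt ?_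
    refine tendsto_iff_norm_sub_tendsto_zero.2 (squeeze_zero' (Eventually.of_forall fun _ => norm_nonneg _) ?_ c7)
    filter_upwards [isOpen_ball.mem_nhds hh] with h' hh'
    have e1 := hcontr h' (hsub hh') ε hε _ (hβ h' ε ⟨hsub hh', hε⟩).1 _ (hβ h ε ⟨hsub hh, hε⟩).1
    rw [(hβ h' ε ⟨hsub hh', hε⟩).2] at e1
    have e2 := norm_add_le (β h' ε - T h' ε (β h ε)) (T h' ε (β h ε) - β h ε)
    rw [sub_add_sub_cancel] at e2
    linarith
  · intro h hh ε hε
    exact ⟨(memE2 _ (hproj h (fr0 h (hsub hh))) _).2 (hzero h (hsub hh) ε hε).1, hβM h (hsub hh) ε hε⟩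
  · -- uniform limit
    rw [Metric.tendstoUniformlyOn_iff]
    intro η hη
    have hcomp : IsCompact (S '' closedBall h0 r1) := (isCompact_closedBall h0 r1).image_of_continuousOn
      (fun h hh => (hS h (fr0 h hh)).continuousAt.continuousWithinAt)
    set η' : ℝ := η / (8 * K ^ 2 * (M + 1)) with hη'
    have hη'0 : 0 < η' := by positivity
    obtain ⟨d1, hd1, hP1⟩ : ∃ d > 0, ∀ x ∈ S '' closedBall h0 r1, ∀ y, dist x y < d →
        ‖P' y - P' x‖ ≤ η' := by
      have := hcomp.uniformContinuousAt_of_continuousAt P' (fun a _ => hP'cont.continuousAt)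
        (Metric.dist_mem_uniformity hη'0)
      obtain ⟨d, hd, hh⟩ := Metric.mem_uniformity_dist.1 this
      refine ⟨d, hd, fun x hx y hxy => ?_⟩
      have := hh hxy hx
      simp only [mem_setOf_eq] at this
      rw [← dist_eq_norm, dist_comm]
      exact this.le
    obtain ⟨d2, hd2, hQ2'⟩ : ∃ d > 0, ∀ x ∈ S '' closedBall h0 r1, ∀ ε ∈ Icc (0:ℝ) 1, ε < d →
        ‖Q x 0 - Q x ε‖ ≤ η' := by
      have := (hcomp.prod (isCompact_Icc (a := (0:ℝ)) (b := 1))).uniformContinuousOn_of_continuous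
        (hQcont.mono (prod_mono (subset_univ _) Subset.rfl))
      obtain ⟨d, hd, hh⟩ := Metric.uniformContinuousOn_iff.1 this η' hη'0
      refine ⟨d, hd, fun x hx ε hε hεd => ?_⟩
      have := hh (x, 0) ⟨hx, by simp⟩ (x, ε) ⟨hx, hε⟩ (by
        simp only [Prod.dist_eq, dist_self]
        rw [max_lt_iff]
        refine ⟨hd, ?_⟩
        simpa [Real.dist_eq, abs_of_nonneg hε.1] using hεd)
      rw [← dist_eq_norm]
      exact this.le
    have lt : ∀ a : ℝ, 0 < a → ∀ᶠ r in 𝓝[>] (0:ℝ), r < a := fun a ha =>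
        mem_nhdsWithin_of_mem_nhds (gt_mem_nhds ha)
    filter_upwards [self_mem_nhdsWithin, lt r1 hr1, lt (d1 / M) (by positivity), lt d2 hd2,
      lt (η / (8 * K ^ 2 * L * M)) (by positivity)] with ε hε0 hεr hεd1 hεd2 hεη h hh
    replace hh := hsub hh
    have hε0' : (0:ℝ) < ε := hε0
    have hε : ε ∈ Icc (0:ℝ) r1 := ⟨hε0'.le, hεr.le⟩
    rw [lt_div_iff₀ hM0] at hεd1
    rw [lt_div_iff₀ (by positivity)] at hεη
    set b := β h ε with hb
    have hbM : ‖b‖ ≤ M * ε := hβM h hh ε hε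
    have hbδ : b ∈ closedBall (0:E) δ := (hβ h ε ⟨hh, hε⟩).1
    obtain ⟨z1, z2⟩ := hzero h hh ε hε
    rw [← hb] at z1 z2
    have hp2b : p2 h b = b := by rw [fp2, z1, sub_zero]
    obtain ⟨a1, a2, a3⟩ := hR h (fρ h hh)
    have e1 : R h (p2 h (P' (S h) b - b)) = b := a2 b ((memE2 _ (hproj h (fr0 h hh)) _).2 z1)
    have e2 : b + ε • R h (p2 h (Q (S h) 0)) =
        R h (p2 h ((P' (S h) b - (P (b + S h) - P (S h))) + ε • (Q (S h) 0 - Q (b + S h) ε))) := by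
      have z3 : (P' (S h) b - (P (b + S h) - P (S h))) + ε • (Q (S h) 0 - Q (b + S h) ε)
        = (P' (S h) b - b) + ε • Q (S h) 0 - F (b + S h) ε := by
        simp only [hF, smul_sub, hA1 h (fr0 h hh)]
        abel
      rw [z3, map_sub, z2, sub_zero, map_add, map_add, e1, map_smul, map_smul]
    have m1 : ‖P' (S h) b - (P (b + S h) - P (S h))‖ ≤ η' * (M * ε) := by
      have := Convex.norm_image_sub_le_of_norm_hasFDerivWithin_le' (f := P) (f' := P') (φ := P' (S h))
        (C := η') (s := closedBall (S h) ‖b‖) (x := S h) (y := b + S h)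
        (fun x _ => (hP x).hasFDerivWithinAt) (by
          intro x hx
          refine hP1 (S h) ⟨h, hh, rfl⟩ x ?_
          rw [dist_comm]
          refine lt_of_le_of_lt hx (lt_of_le_of_lt hbM ?_)
          linarith) (convex_closedBall _ _) (by simp) (by simp [dist_eq_norm])
      rw [add_sub_cancel_right, norm_sub_rev] at this
      refine this.trans ?_
      gcongr
    have m2 : ‖Q (S h) 0 - Q (b + S h) ε‖ ≤ η' + L * (M * ε) := by
      have q1 := hQ2' (S h) ⟨h, hh, rfl⟩ ε (fε ε hε) hεd2
      have q2 := hQL ε (fε ε hε) (S h) (b + S h) ((fS h hh).trans (by nlinarith)) (by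
        have := fin h hh b hbδ
        rwa [hp2b] at this)
      have q3 : ‖S h - (b + S h)‖ = ‖b‖ := by
        rw [norm_sub_rev, add_sub_cancel_right]
      rw [q3] at q2
      have q4 : L * ‖b‖ ≤ L * (M * ε) := by gcongr
      have q5 := norm_add_le (Q (S h) 0 - Q (S h) ε) (Q (S h) ε - Q (b + S h) ε)
      rw [sub_add_sub_cancel] at q5
      linarith
    have m3 := hRb h hh ((P' (S h) b - (P (b + S h) - P (S h))) + ε • (Q (S h) 0 - Q (b + S h) ε))
    rw [← e2] at m3
    have m4 : ‖(P' (S h) b - (P (b + S h) - P (S h))) + ε • (Q (S h) 0 - Q (b + S h) ε)‖ ≤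
        ε * (η' * (M + 1) + L * M * ε) := by
      refine (norm_add_le _ _).trans ?_
      rw [norm_smul, Real.norm_of_nonneg hε0'.le]
      have := mul_le_mul_of_nonneg_left m2 hε0'.le
      nlinarith
    have m5 : ‖b + ε • R h (p2 h (Q (S h) 0))‖ ≤ ε * (η / 2) := by
      refine m3.trans ?_
      calc _ ≤ 2 * K ^ 2 * (ε * (η' * (M + 1) + L * M * ε)) := by gcongr
        _ = ε * (2 * K ^ 2 * (η' * (M + 1)) + 1/4 * (ε * (8 * K ^ 2 * L * M))) := by ring
        _ ≤ ε * (2 * K ^ 2 * (η' * (M + 1)) + 1/4 * η) := by gcongr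
        _ = ε * (η / 2) := by
          rw [hη']; field_simp; ring
    have m6 : ε⁻¹ • b + R h (p2 h (Q (S h) 0)) = ε⁻¹ • (b + ε • R h (p2 h (Q (S h) 0))) := by
      rw [smul_add, smul_smul, inv_mul_cancel₀ hε0'.ne', one_smul]
    rw [dist_comm, dist_eq_norm, sub_neg_eq_add]
    calc _ = ‖ε⁻¹ • b + R h (p2 h (Q (S h) 0))‖ := rfl
      _ = ε⁻¹ * ‖b + ε • R h (p2 h (Q (S h) 0))‖ := by
        rw [m6, norm_smul, norm_inv, Real.norm_of_nonneg hε0'.le]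
      _ ≤ ε⁻¹ * (ε * (η / 2)) := by gcongr
      _ = η / 2 := by field_simp
      _ < η := by linarith
  · -- (1)
    intro ξ hξ ε hε hsol
    obtain ⟨b1, b2, b3⟩ := hr2p (lt_of_lt_of_le hξ (min_le_right _ _))
    have hε' : ε ∈ Icc (0:ℝ) r1 := ⟨hε.1, hε.2.trans ((min_le_left _ _).trans (by linarith))⟩
    refine ⟨b2, ?_⟩
    have e1 := huniq (H ξ) (hsub b2) ε hε' (ξ - S (H ξ)) (by simpa using b3.le) (hHp ξ b1).2
      (by rw [sub_add_cancel]; exact hsol)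
    rw [← e1, sub_add_cancel, hsol, map_zero]
    have := hSinv (H ξ) (fρ _ (hsub b2)) 0
    rwa [map_zero] at this
  · -- (2)
    intro h hh ε hε hsol
    have z := (hzero h (hsub hh) ε hε).2
    have z' : p2 h (P (β h ε + S h) - (β h ε + S h) + ε • Q (β h ε + S h) ε) = 0 := z
    obtain ⟨a, ha⟩ : π1 h (P (β h ε + S h) - (β h ε + S h) + ε • Q (β h ε + S h) ε) ∈ range (S' h) := by
      rw [← hrange h (fr0 h (hsub hh))]; exact ⟨_, rfl⟩
    rw [← ha, hSinv h (fρ h (hsub hh))] at hsol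
    rw [hsol, map_zero] at ha
    rw [fp2, ← ha, sub_zero] at z'
    exact z'
end

section
/- Suppose there exist a sequence ε_n ∈ (0,1] with ε_n → 0 and a sequence ξ_n ∈ E with ξ_n → ξ0 as n → ∞ such that F(ξ_n,ε_n) = 0 for every n. Then M(h0) = 0, that is, (S'(h0))^{-1} π_{1,h0}[Q(ξ0,0) − (P'(ξ0) − I) R_{h0} π_{2,h0} Q(ξ0,0)] = 0 in ℝ^k. -/
open Set Metric Topology Filter

/- Theorem 2.3 (necessary condition): if F(ξ_n, ε_n) = 0 with ε_n → 0+ and ξ_n → ξ0,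
then M(h0) = (S'(h0))⁻¹ π_{1,h0}[Q(ξ0,0) − (P'(ξ0) − I) R_{h0} π_{2,h0} Q(ξ0,0)] = 0. -/
theorem stmt2
    {E : Type*} [NormedAddCommGroup E] [NormedSpace ℝ E] [CompleteSpace E]
    {k : ℕ} (hk : 1 ≤ k)
    (P : E → E) (P' : E → E →L[ℝ] E)
    (hP : ∀ x, HasFDerivAt P (P' x) x) (hP'cont : Continuous P')
    (Q : E → ℝ → E)
    (hQcont : ContinuousOn (fun p : E × ℝ => Q p.1 p.2) (univ ×ˢ Icc (0:ℝ) 1))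
    (hQlip : ∀ R > (0:ℝ), ∃ L > (0:ℝ), ∀ ε ∈ Icc (0:ℝ) 1, ∀ ξ₁ ξ₂ : E,
      ‖ξ₁‖ ≤ R → ‖ξ₂‖ ≤ R → ‖Q ξ₁ ε - Q ξ₂ ε‖ ≤ L * ‖ξ₁ - ξ₂‖)
    -- (A1)
    (h0 : EuclideanSpace ℝ (Fin k)) (r0 : ℝ) (hr0 : 0 < r0)
    (S : EuclideanSpace ℝ (Fin k) → E)
    (S' : EuclideanSpace ℝ (Fin k) → (EuclideanSpace ℝ (Fin k) →L[ℝ] E))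
    (hS : ∀ h ∈ ball h0 r0, HasFDerivAt S (S' h) h)
    (hS'cont : ContinuousOn S' (ball h0 r0))
    (hA1 : ∀ h ∈ ball h0 r0, P (S h) = S h)
    -- (A2)
    (hA2 : Function.Injective ⇑(S' h0))
    -- (A3)
    (π1 : EuclideanSpace ℝ (Fin k) → E →L[ℝ] E)
    (hproj : ∀ h ∈ ball h0 r0, (π1 h).comp (π1 h) = π1 h)
    (hrange : ∀ h ∈ ball h0 r0, range ⇑(π1 h) = range ⇑(S' h))
    (hπ1cont : ContinuousOn π1 (ball h0 r0))
    -- (A4) together with the local inverses R h and Sinv h on a small ball around h0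
    (ρ : ℝ) (hρ : 0 < ρ) (hρ0 : ρ ≤ r0)
    (R : EuclideanSpace ℝ (Fin k) → (E →L[ℝ] E))
    (hR : ∀ h ∈ ball h0 ρ,
      (∀ x : E, R h x ∈ range ⇑(ContinuousLinearMap.id ℝ E - π1 h)) ∧
      (∀ x ∈ range ⇑(ContinuousLinearMap.id ℝ E - π1 h),
        R h ((ContinuousLinearMap.id ℝ E - π1 h) ((P' (S h)) x - x)) = x) ∧
      (∀ x ∈ range ⇑(ContinuousLinearMap.id ℝ E - π1 h),
        (ContinuousLinearMap.id ℝ E - π1 h) ((P' (S h)) (R h x) - R h x) = x))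
    (Sinv : EuclideanSpace ℝ (Fin k) → E → EuclideanSpace ℝ (Fin k))
    (hSinv : ∀ h ∈ ball h0 ρ, ∀ a, Sinv h (S' h a) = a)
    -- sequences ε_n → 0+, ξ_n → ξ0 with F(ξ_n, ε_n) = 0
    (εs : ℕ → ℝ) (hεs : ∀ n, εs n ∈ Ioc (0:ℝ) 1)
    (hεlim : Tendsto εs atTop (𝓝 0))
    (ξs : ℕ → E) (hξlim : Tendsto ξs atTop (𝓝 (S h0)))
    (hFzero : ∀ n, P (ξs n) - ξs n + εs n • Q (ξs n) (εs n) = 0) :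
    Sinv h0 (π1 h0 (Q (S h0) 0 -
      ((P' (S h0)) (R h0 ((ContinuousLinearMap.id ℝ E - π1 h0) (Q (S h0) 0))) -
        R h0 ((ContinuousLinearMap.id ℝ E - π1 h0) (Q (S h0) 0))))) = 0 := by
  have hb0 : h0 ∈ ball h0 r0 := mem_ball_self hr0
  have hbρ : h0 ∈ ball h0 ρ := mem_ball_self hρ
  obtain ⟨-, hR2, -⟩ := hR h0 hbρ
  -- strict derivatives
  have hPs : HasStrictFDerivAt P (P' (S h0)) (S h0) :=
    hasStrictFDerivAt_of_hasFDerivAt_of_continuousAt (Eventually.of_forall hP) hP'cont.continuousAt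
  have hnh : ball h0 r0 ∈ 𝓝 h0 := isOpen_ball.mem_nhds hb0
  have hSs : HasStrictFDerivAt S (S' h0) h0 :=
    hasStrictFDerivAt_of_hasFDerivAt_of_continuousAt
      (Filter.mem_of_superset hnh hS) (hS'cont.continuousAt hnh)
  have hπS : ∀ a, π1 h0 (S' h0 a) = S' h0 a := by
    intro a
    have : S' h0 a ∈ range ⇑(π1 h0) := by rw [hrange h0 hb0]; exact ⟨a, rfl⟩
    obtain ⟨x, hx⟩ := this
    rw [← hx]
    exact congrArg (fun f : E →L[ℝ] E => f x) (hproj h0 hb0)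
  -- the left inverse J of S' h0 with kernel ker π1
  obtain ⟨J, hJ1, hJ2⟩ : ∃ J : E →L[ℝ] EuclideanSpace ℝ (Fin k),
      (∀ a, J (S' h0 a) = a) ∧ ∀ y, J y = 0 → π1 h0 y = 0 := by
    let e := (LinearEquiv.ofInjective (S' h0).toLinearMap hA2).toContinuousLinearEquiv
    have hmem : ∀ x, π1 h0 x ∈ LinearMap.range (S' h0).toLinearMap := by
      intro x
      have : π1 h0 x ∈ range ⇑(S' h0) := by rw [← hrange h0 hb0]; exact ⟨x, rfl⟩
      exact this
    refine ⟨(e.symm : _ →L[ℝ] _).comp ((π1 h0).codRestrict _ hmem), ?_, ?_⟩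
    · intro a
      change e.symm _ = a
      rw [ContinuousLinearEquiv.symm_apply_eq]
      apply Subtype.ext
      exact hπS a
    · intro y hy
      change e.symm _ = 0 at hy
      rw [ContinuousLinearEquiv.symm_apply_eq, map_zero] at hy
      exact congrArg Subtype.val hy
  have hf : HasStrictFDerivAt (fun h => J (S h))
      ((ContinuousLinearEquiv.refl ℝ (EuclideanSpace ℝ (Fin k)) :
        EuclideanSpace ℝ (Fin k) ≃L[ℝ] EuclideanSpace ℝ (Fin k)) :
        EuclideanSpace ℝ (Fin k) →L[ℝ] EuclideanSpace ℝ (Fin k)) h0 := by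
    have h1 := J.hasStrictFDerivAt.comp h0 hSs
    refine h1.congr_fderiv ?_
    refine ContinuousLinearMap.ext fun a => ?_
    exact hJ1 a
  set g := hf.localInverse with hg
  have hJξ : Tendsto (fun n => J (ξs n)) atTop (𝓝 (J (S h0))) :=
    (J.continuous.tendsto _).comp hξlim
  have hh : Tendsto (fun n => g (J (ξs n))) atTop (𝓝 h0) := hf.localInverse_tendsto.comp hJξ
  have hright : ∀ᶠ n in atTop, J (S (g (J (ξs n)))) = J (ξs n) :=
    hJξ.eventually hf.eventually_right_inverse
  set hn : ℕ → EuclideanSpace ℝ (Fin k) := fun n => g (J (ξs n)) with hhn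
  have hin : ∀ᶠ n in atTop, hn n ∈ ball h0 r0 := hh.eventually hnh
  have hSlim : Tendsto (fun n => S (hn n)) atTop (𝓝 (S h0)) :=
    (hSs.hasFDerivAt.continuousAt.tendsto).comp hh
  set y : ℕ → E := fun n => ξs n - S (hn n) with hy
  set A : E →L[ℝ] E := P' (S h0) - ContinuousLinearMap.id ℝ E with hA
  set T : E →L[ℝ] E := (R h0).comp (ContinuousLinearMap.id ℝ E - π1 h0) with hT
  set r : ℕ → E := fun n => P (ξs n) - P (S (hn n)) - P' (S h0) (ξs n - S (hn n)) with hr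
  have hro : r =o[atTop] y := hPs.isLittleO.comp_tendsto (hξlim.prodMk_nhds hSlim)
  have hTA : ∀ᶠ n in atTop, T (A (y n)) = y n := by
    filter_upwards [hright] with n h
    have h0' : π1 h0 (y n) = 0 := hJ2 _ (by simp only [hy, map_sub]; rw [h, sub_self])
    refine hR2 (y n) ⟨y n, by simp [h0']⟩
  set q : ℕ → E := fun n => Q (ξs n) (εs n) with hq
  have hqlim : Tendsto q atTop (𝓝 (Q (S h0) 0)) := by
    have hc := hQcont (S h0, 0) ⟨mem_univ _, by simp⟩
    refine Tendsto.comp hc (tendsto_nhdsWithin_iff.2 ⟨hξlim.prodMk_nhds hεlim, ?_⟩)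
    exact Eventually.of_forall fun n => ⟨mem_univ _, (hεs n).1.le, (hεs n).2⟩
  have heq : ∀ᶠ n in atTop, A (y n) + r n + εs n • q n = 0 := by
    filter_upwards [hin] with n h
    rw [← hFzero n]
    simp only [hA, hy, hr, hq, ContinuousLinearMap.sub_apply, ContinuousLinearMap.id_apply,
      hA1 _ h]
    abel
  have hyeq : ∀ᶠ n in atTop, T (r n) + y n = -(εs n • T (q n)) := by
    filter_upwards [heq, hTA] with n h1 h2
    have := congrArg T h1
    simp only [map_add, map_smul, map_zero, h2] at this
    rw [eq_neg_iff_add_eq_zero, ← this]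
    abel
  have hTro : (fun n => T (r n)) =o[atTop] y := (T.isBigO_comp r atTop).trans_isLittleO hro
  have hTq : Tendsto (fun n => T (q n)) atTop (𝓝 (T (Q (S h0) 0))) :=
    (T.continuous.tendsto _).comp hqlim
  have hyO : y =O[atTop] εs := by
    have h1 : y =O[atTop] (fun n => T (r n) + y n) := hTro.right_isBigO_add
    have h2 : (fun n => -(εs n • T (q n))) =O[atTop] εs := by
      have := ((Asymptotics.isBigO_refl εs atTop).smul (hTq.isBigO_one ℝ)).neg_left
      simpa using this
    exact (h1.congr' EventuallyEq.rfl hyeq).trans h2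
  have hrε : Tendsto (fun n => (εs n)⁻¹ • r n) atTop (𝓝 0) :=
    (hro.trans_isBigO hyO).tendsto_inv_smul_nhds_zero
  have hkey : ∀ᶠ n in atTop, q n - A (T (q n)) =
      A (T ((εs n)⁻¹ • r n)) - (εs n)⁻¹ • r n := by
    filter_upwards [heq, hyeq] with n h1 h2
    have hne : εs n ≠ 0 := (hεs n).1.ne'
    have h3 : y n = -(εs n • T (q n)) - T (r n) := by rw [← h2]; abel
    rw [h3] at h1
    simp only [map_sub, map_neg, map_smul] at h1 ⊢
    have h4 := congrArg (fun v => (εs n)⁻¹ • v) h1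
    simp only [smul_add, smul_sub, smul_neg, smul_zero, inv_smul_smul₀ hne] at h4
    rw [← sub_eq_zero, ← h4]
    abel
  have hl1 : Tendsto (fun n => q n - A (T (q n))) atTop
      (𝓝 (Q (S h0) 0 - A (T (Q (S h0) 0)))) :=
    hqlim.sub ((A.continuous.tendsto _).comp hTq)
  have hl2 : Tendsto (fun n => A (T ((εs n)⁻¹ • r n)) - (εs n)⁻¹ • r n) atTop (𝓝 0) := by
    have := (((A.comp T).continuous.tendsto 0).comp hrε).sub hrε
    simpa using this
  have hfin : Q (S h0) 0 - A (T (Q (S h0) 0)) = 0 :=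
    tendsto_nhds_unique hl1 (hl2.congr' (hkey.mono fun n h => h.symm))
  have hS0 : Sinv h0 0 = 0 := by simpa using hSinv h0 hbρ 0
  have hfin' : Q (S h0) 0 -
      ((P' (S h0)) (R h0 ((ContinuousLinearMap.id ℝ E - π1 h0) (Q (S h0) 0))) -
        R h0 ((ContinuousLinearMap.id ℝ E - π1 h0) (Q (S h0) 0))) = 0 := hfin
  rw [hfin', map_zero, hS0]
end

section
/- After possibly diminishing r1 > 0, one has M_ε(h) → M(h) as ε → 0+, uniformly with respect to h ∈ B_{ℝ^k}(h0,r1). -/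
open Set Metric Topology Filter

/- Convergence M_ε → M as ε → 0+, uniformly on a (possibly diminished) ball around h0.
Here M_ε(h) = (S'(h))⁻¹ π_{1,h}[(P'(S(h)) − I)β(h,ε)/ε + o_h(β(h,ε))/ε + Q(β(h,ε)+S(h),ε)]
with o_h(β) = P(β+S(h)) − S(h) − P'(S(h))β, and
M(h) = (S'(h))⁻¹ π_{1,h}[Q(S(h),0) − (P'(S(h)) − I) R_h π_{2,h} Q(S(h),0)]. -/
theorem stmt3
    {E : Type*} [NormedAddCommGroup E] [NormedSpace ℝ E] [CompleteSpace E]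
    {k : ℕ} (hk : 1 ≤ k)
    (P : E → E) (P' : E → E →L[ℝ] E)
    (hP : ∀ x, HasFDerivAt P (P' x) x) (hP'cont : Continuous P')
    (Q : E → ℝ → E)
    (hQcont : ContinuousOn (fun p : E × ℝ => Q p.1 p.2) (univ ×ˢ Icc (0:ℝ) 1))
    (hQlip : ∀ R > (0:ℝ), ∃ L > (0:ℝ), ∀ ε ∈ Icc (0:ℝ) 1, ∀ ξ₁ ξ₂ : E,
      ‖ξ₁‖ ≤ R → ‖ξ₂‖ ≤ R → ‖Q ξ₁ ε - Q ξ₂ ε‖ ≤ L * ‖ξ₁ - ξ₂‖)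
    -- (A1)
    (h0 : EuclideanSpace ℝ (Fin k)) (r0 : ℝ) (hr0 : 0 < r0)
    (S : EuclideanSpace ℝ (Fin k) → E)
    (S' : EuclideanSpace ℝ (Fin k) → (EuclideanSpace ℝ (Fin k) →L[ℝ] E))
    (hS : ∀ h ∈ ball h0 r0, HasFDerivAt S (S' h) h)
    (hS'cont : ContinuousOn S' (ball h0 r0))
    (hA1 : ∀ h ∈ ball h0 r0, P (S h) = S h)
    -- (A2)
    (hA2 : Function.Injective ⇑(S' h0))
    -- (A3)
    (π1 : EuclideanSpace ℝ (Fin k) → E →L[ℝ] E)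
    (hproj : ∀ h ∈ ball h0 r0, (π1 h).comp (π1 h) = π1 h)
    (hrange : ∀ h ∈ ball h0 r0, range ⇑(π1 h) = range ⇑(S' h))
    (hπ1cont : ContinuousOn π1 (ball h0 r0))
    -- (A4) together with the local inverses R h and Sinv h on the ball of radius r1
    (r1 : ℝ) (hr1 : 0 < r1) (hr1r0 : r1 < r0)
    (R : EuclideanSpace ℝ (Fin k) → (E →L[ℝ] E))
    (hR : ∀ h ∈ ball h0 r1,
      (∀ x : E, R h x ∈ range ⇑(ContinuousLinearMap.id ℝ E - π1 h)) ∧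
      (∀ x ∈ range ⇑(ContinuousLinearMap.id ℝ E - π1 h),
        R h ((ContinuousLinearMap.id ℝ E - π1 h) ((P' (S h)) x - x)) = x) ∧
      (∀ x ∈ range ⇑(ContinuousLinearMap.id ℝ E - π1 h),
        (ContinuousLinearMap.id ℝ E - π1 h) ((P' (S h)) (R h x) - R h x) = x))
    (Sinv : EuclideanSpace ℝ (Fin k) → E → EuclideanSpace ℝ (Fin k))
    (hSinv : ∀ h ∈ ball h0 r1, ∀ a, Sinv h (S' h a) = a)
    -- the function β from the Lyapunov-Schmidt reduction
    (β : EuclideanSpace ℝ (Fin k) → ℝ → E) (Mc : ℝ) (hMc : 0 < Mc)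
    (hβcont : ∀ ε ∈ Icc (0:ℝ) r1, ContinuousOn (fun h => β h ε) (ball h0 r1))
    (hβmem : ∀ h ∈ ball h0 r1, ∀ ε ∈ Icc (0:ℝ) r1,
      β h ε ∈ range ⇑(ContinuousLinearMap.id ℝ E - π1 h))
    (hβbd : ∀ h ∈ ball h0 r1, ∀ ε ∈ Icc (0:ℝ) r1, ‖β h ε‖ ≤ Mc * ε)
    (hβeq : ∀ h ∈ ball h0 r1, ∀ ε ∈ Icc (0:ℝ) r1,
      (ContinuousLinearMap.id ℝ E - π1 h)
        (P (β h ε + S h) - (β h ε + S h) + ε • Q (β h ε + S h) ε) = 0)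
    (hβlim : TendstoUniformlyOn (fun ε h => ε⁻¹ • β h ε)
      (fun h => -(R h ((ContinuousLinearMap.id ℝ E - π1 h) (Q (S h) 0))))
      (𝓝[>] (0:ℝ)) (ball h0 r1)) :
    ∃ r1' : ℝ, 0 < r1' ∧ r1' ≤ r1 ∧
      TendstoUniformlyOn
        (fun ε h => Sinv h (π1 h
          (ε⁻¹ • ((P' (S h)) (β h ε) - β h ε) +
            ε⁻¹ • (P (β h ε + S h) - S h - (P' (S h)) (β h ε)) +
            Q (β h ε + S h) ε)))
        (fun h => Sinv h (π1 h (Q (S h) 0 -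
          ((P' (S h)) (R h ((ContinuousLinearMap.id ℝ E - π1 h) (Q (S h) 0))) -
            R h ((ContinuousLinearMap.id ℝ E - π1 h) (Q (S h) 0))))))
        (𝓝[>] (0:ℝ)) (ball h0 r1') := by
  classical
  have h0mem : h0 ∈ ball h0 r0 := mem_ball_self hr0
  have hnb : ball h0 r0 ∈ 𝓝 h0 := ball_mem_nhds _ hr0
  have hScont : ContinuousOn S (ball h0 r0) := fun h hh => (hS h hh).continuousAt.continuousWithinAt
  -- antilipschitz
  obtain ⟨c, hc, hanti⟩ : ∃ c > (0:ℝ), ∀ a, ‖a‖ ≤ c * ‖S' h0 a‖ := by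
    obtain ⟨K, hK, hK'⟩ := LinearMap.exists_antilipschitzWith (S' h0 : EuclideanSpace ℝ (Fin k) →ₗ[ℝ] E)
      (LinearMap.ker_eq_bot.2 hA2)
    refine ⟨K, by exact_mod_cast hK, fun a => ?_⟩
    have := hK'.le_mul_dist a 0
    simpa using this
  have e1 : ∀ᶠ h in 𝓝 h0, ‖S' h - S' h0‖ < 1 / (2 * c) := by
    have := Metric.tendsto_nhds.1 (hS'cont.continuousAt hnb).tendsto (1 / (2*c)) (by positivity)
    simpa only [dist_eq_norm] using this
  have e2 : ∀ᶠ h in 𝓝 h0, ‖π1 h‖ < ‖π1 h0‖ + 1 :=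
    (hπ1cont.continuousAt hnb).norm.eventually (gt_mem_nhds (by linarith))
  have e3 : ∀ᶠ h in 𝓝 h0, ‖P' (S h)‖ < ‖P' (S h0)‖ + 1 :=
    ((hP'cont.continuousAt).comp (hScont.continuousAt hnb)).norm.eventually
      (gt_mem_nhds (by simp))
  obtain ⟨ρ, hρ, hball⟩ := Metric.eventually_nhds_iff_ball.1 (e1.and (e2.and e3))
  set r' := min ρ (r1 / 2) with hr'
  have hr'pos : 0 < r' := lt_min hρ (by linarith)
  have hr'1 : r' ≤ r1 / 2 := min_le_right _ _
  refine ⟨r', hr'pos, by linarith, ?_⟩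
  have hsub1 : ball h0 r' ⊆ ball h0 r1 := ball_subset_ball (by linarith)
  have hsub0 : ball h0 r' ⊆ ball h0 r0 := ball_subset_ball (by linarith)
  have hsubc : closedBall h0 r' ⊆ ball h0 r0 := closedBall_subset_ball (by linarith)
  have hsubρ : ball h0 r' ⊆ ball h0 ρ := ball_subset_ball (min_le_left _ _)
  have hKc : IsCompact (S '' closedBall h0 r') :=
    (isCompact_closedBall _ _).image_of_continuousOn (hScont.mono hsubc)
  have hSK : ∀ h ∈ ball h0 r', S h ∈ S '' closedBall h0 r' := fun h hh =>
    mem_image_of_mem _ (ball_subset_closedBall hh)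
  -- uniform continuity of P'
  have uP : ∀ η > 0, ∃ δ > 0, ∀ h ∈ ball h0 r', ∀ y, ‖y - S h‖ < δ → ‖P' y - P' (S h)‖ ≤ η := by
    intro η hη
    have := hKc.uniformContinuousAt_of_continuousAt P' (fun x _ => hP'cont.continuousAt)
      (Metric.dist_mem_uniformity hη)
    obtain ⟨δ, hδ, hh⟩ := Metric.mem_uniformity_dist.1 this
    refine ⟨δ, hδ, fun h hmem y hy => ?_⟩
    have h2 := hh (a := S h) (b := y) (by rwa [dist_comm, dist_eq_norm]) (hSK h hmem)
    have h3 : dist (P' (S h)) (P' y) < η := h2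
    rw [dist_comm, dist_eq_norm] at h3
    exact h3.le
  have uQ : ∀ η > 0, ∃ δ > 0, ∀ h ∈ ball h0 r', ∀ y, ‖y - S h‖ < δ → ∀ ε, 0 < ε → ε < δ → ε ≤ 1 →
      ‖Q y ε - Q (S h) 0‖ ≤ η := by
    intro η hη
    let F : E × ℝ → E := fun p => Q p.1 (projIcc (0:ℝ) 1 zero_le_one p.2)
    have hF : Continuous F := by
      refine hQcont.comp_continuous
        (f := fun p : E × ℝ => (p.1, (projIcc (0:ℝ) 1 zero_le_one p.2 : ℝ))) ?_ ?_
      · exact continuous_fst.prodMk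
          (continuous_subtype_val.comp (continuous_projIcc.comp continuous_snd))
      · intro p
        exact ⟨mem_univ _, (projIcc (0:ℝ) 1 zero_le_one p.2).2⟩
    have := (hKc.prod (isCompact_singleton (x := (0:ℝ)))).uniformContinuousAt_of_continuousAt F
      (fun x _ => hF.continuousAt) (Metric.dist_mem_uniformity hη)
    obtain ⟨δ, hδ, hh⟩ := Metric.mem_uniformity_dist.1 this
    refine ⟨δ, hδ, fun h hmem y hy ε hε hεδ hε1 => ?_⟩
    have h2 := hh (a := (S h, 0)) (b := (y, ε)) (by
      rw [Prod.dist_eq]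
      refine max_lt ?_ ?_
      · rwa [dist_comm, dist_eq_norm]
      · rw [dist_comm, Real.dist_eq, sub_zero, abs_of_pos hε]; exact hεδ) ⟨hSK h hmem, rfl⟩
    have h3 : dist (F (S h, 0)) (F (y, ε)) < η := h2
    have h4 : F (S h, 0) = Q (S h) 0 := by
      simp only [F]; rw [projIcc_of_mem zero_le_one (left_mem_Icc.2 zero_le_one)]
    have h5 : F (y, ε) = Q y ε := by
      simp only [F]; rw [projIcc_of_mem zero_le_one ⟨hε.le, hε1⟩]
    rw [h4, h5, dist_comm, dist_eq_norm] at h3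
    exact h3.le
  -- Lipschitz bound for Sinv
  have hSinvLip : ∀ h ∈ ball h0 r', ∀ x y,
      ‖Sinv h (π1 h x) - Sinv h (π1 h y)‖ ≤ 2 * c * ((‖π1 h0‖ + 1) * ‖x - y‖) := by
    intro h hh x y
    obtain ⟨b1, b2, -⟩ := hball h (hsubρ hh)
    have hx : π1 h x ∈ range (S' h) := by rw [← hrange h (hsub0 hh)]; exact mem_range_self _
    have hy : π1 h y ∈ range (S' h) := by rw [← hrange h (hsub0 hh)]; exact mem_range_self _
    obtain ⟨a, ha⟩ := hx
    obtain ⟨b, hb⟩ := hy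
    have hab : S' h (a - b) = π1 h (x - y) := by rw [map_sub, map_sub, ha, hb]
    rw [← ha, ← hb, hSinv h (hsub1 hh), hSinv h (hsub1 hh)]
    have k1 := hanti (a - b)
    have k2 : ‖S' h0 (a - b)‖ ≤ ‖S' h (a - b)‖ + 1 / (2 * c) * ‖a - b‖ := by
      have q1 : ‖(S' h - S' h0) (a - b)‖ ≤ 1 / (2 * c) * ‖a - b‖ :=
        (ContinuousLinearMap.le_opNorm _ _).trans (by gcongr)
      have q2 : S' h0 (a - b) = S' h (a - b) - (S' h - S' h0) (a - b) := by simp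
      rw [q2]
      exact (norm_sub_le _ _).trans (by gcongr)
    have k3 : ‖S' h (a - b)‖ ≤ (‖π1 h0‖ + 1) * ‖x - y‖ := by
      rw [hab]
      exact (ContinuousLinearMap.le_opNorm _ _).trans (by gcongr)
    have k4 : ‖a - b‖ ≤ c * (‖S' h (a - b)‖ + 1 / (2 * c) * ‖a - b‖) :=
      k1.trans (by gcongr)
    have k5 : c * (‖S' h (a - b)‖ + 1 / (2 * c) * ‖a - b‖) = c * ‖S' h (a - b)‖ + ‖a - b‖ / 2 := by
      field_simp
    have k6 : c * ‖S' h (a - b)‖ ≤ c * ((‖π1 h0‖ + 1) * ‖x - y‖) := by gcongr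
    linarith
  rw [Metric.tendstoUniformlyOn_iff]
  intro η hη
  set A := 2 * c * (‖π1 h0‖ + 1) with hA
  set B := ‖P' (S h0)‖ + 2 with hB
  have hApos : 0 < A := by positivity
  have hBpos : 0 < B := by positivity
  set τ := η / (2 * A * (B + Mc + 1)) with hτ
  have hτpos : 0 < τ := by positivity
  obtain ⟨δ1, hδ1, H1⟩ := uP τ hτpos
  obtain ⟨δ2, hδ2, H2⟩ := uQ τ hτpos
  have hsmall : ∀ d > (0:ℝ), ∀ᶠ ε in 𝓝[>] (0:ℝ), ε < d := fun d hd =>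
    mem_nhdsWithin_of_mem_nhds (gt_mem_nhds hd)
  filter_upwards [Metric.tendstoUniformlyOn_iff.1 hβlim τ hτpos, self_mem_nhdsWithin,
    hsmall r1 hr1, hsmall 1 one_pos, hsmall δ2 hδ2, hsmall (δ1 / Mc) (by positivity),
    hsmall (δ2 / Mc) (by positivity)] with ε hlim hε hεr hε1 hεδ2 hεM1 hεM2 h hh
  have hε : 0 < ε := hε
  obtain ⟨-, -, b3⟩ := hball h (hsubρ hh)
  have hβ := hβbd h (hsub1 hh) ε ⟨hε.le, hεr.le⟩
  have hβ1 : ‖β h ε‖ < δ1 := by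
    rw [lt_div_iff₀ hMc] at hεM1; linarith
  have hβ2 : ‖β h ε‖ < δ2 := by
    rw [lt_div_iff₀ hMc] at hεM2; linarith
  have T1 := hlim h (hsub1 hh)
  rw [dist_comm, dist_eq_norm] at T1
  have T2 : ‖P (β h ε + S h) - S h - P' (S h) (β h ε)‖ ≤ τ * ‖β h ε‖ := by
    have := Convex.norm_image_sub_le_of_norm_hasFDerivWithin_le' (𝕜 := ℝ) (f := P) (f' := P')
      (φ := P' (S h)) (s := ball (S h) δ1) (C := τ) (x := S h) (y := β h ε + S h)
      (fun x _ => (hP x).hasFDerivWithinAt)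
      (fun x hx => H1 h hh x (by rwa [mem_ball, dist_eq_norm] at hx))
      (convex_ball _ _) (mem_ball_self hδ1) (by simpa [mem_ball, dist_eq_norm] using hβ1)
    rwa [hA1 h (hsub0 hh), add_sub_cancel_right] at this
  have T2' : ‖ε⁻¹ • (P (β h ε + S h) - S h - P' (S h) (β h ε))‖ ≤ τ * Mc := by
    rw [norm_smul, norm_inv, Real.norm_of_nonneg hε.le, inv_mul_le_iff₀ hε]
    calc _ ≤ _ := T2
      _ ≤ τ * (Mc * ε) := by gcongr
      _ = _ := by ring
  have T3 := H2 h hh (β h ε + S h) (by simpa using hβ2) ε hε hεδ2 hε1.le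
  set w := R h ((ContinuousLinearMap.id ℝ E - π1 h) (Q (S h) 0)) with hw
  rw [dist_comm, dist_eq_norm]
  refine (hSinvLip h hh _ _).trans_lt ?_
  have T1' : ‖P' (S h) (ε⁻¹ • β h ε - -w) - (ε⁻¹ • β h ε - -w)‖ ≤ B * τ := by
    have q := (P' (S h)).le_opNorm (ε⁻¹ • β h ε - -w)
    have q2 : ‖P' (S h)‖ * ‖ε⁻¹ • β h ε - -w‖ ≤ (‖P' (S h0)‖ + 1) * τ := by gcongr
    have q3 := norm_sub_le (P' (S h) (ε⁻¹ • β h ε - -w)) (ε⁻¹ • β h ε - -w)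
    have : B * τ = (‖P' (S h0)‖ + 1) * τ + τ := by rw [hB]; ring
    linarith
  have key : ∀ u v z : E, (ε⁻¹ • (P' (S h) (β h ε) - β h ε) + u + v) - (z - (P' (S h) w - w))
      = (P' (S h) (ε⁻¹ • β h ε - -w) - (ε⁻¹ • β h ε - -w)) + u + (v - z) := by
    intro u v z
    simp only [map_sub, map_neg, map_smul, smul_sub]
    abel
  rw [key]
  have tot := (norm_add₃_le (a := P' (S h) (ε⁻¹ • β h ε - -w) - (ε⁻¹ • β h ε - -w))
    (b := ε⁻¹ • (P (β h ε + S h) - S h - P' (S h) (β h ε)))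
    (c := Q (β h ε + S h) ε - Q (S h) 0)).trans (add_le_add_three T1' T2' T3)
  rw [← mul_assoc, ← hA]
  calc _ ≤ A * (B * τ + τ * Mc + τ) := mul_le_mul_of_nonneg_left tot hApos.le
    _ = η / 2 := by rw [hτ]; field_simp
    _ < η := by linarith
end

section
/- For all ξ1, ξ2, ζ1, ζ2 ∈ E one has ‖Ψ(ξ2) − Ψ(ξ1) − Ψ(ζ2) + Ψ(ζ1)‖ ≤ sup_{0 ≤ θ ≤ 1} ‖Ψ'(ζ2 + θ(ξ2 − ζ2))‖ · ‖ξ2 − ξ1 − ζ2 + ζ1‖ + L · max{‖ξ2 − ξ1‖, ‖ζ2 − ζ1‖} · ‖ξ1 − ζ1‖. -/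
open Set

/- The four-point mean value type estimate for a differentiable map Ψ with Lipschitz
derivative (inequality (3.7) in the paper). -/
theorem stmt6
    {E : Type*} [NormedAddCommGroup E] [NormedSpace ℝ E]
    (Ψ : E → E) (Ψ' : E → E →L[ℝ] E)
    (hderiv : ∀ x, HasFDerivAt Ψ (Ψ' x) x)
    (L : ℝ) (hL : 0 < L)
    (hlip : ∀ x y : E, ‖Ψ' x - Ψ' y‖ ≤ L * ‖x - y‖)
    (ξ₁ ξ₂ ζ₁ ζ₂ : E) :
    ‖Ψ ξ₂ - Ψ ξ₁ - Ψ ζ₂ + Ψ ζ₁‖ ≤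
      (⨆ θ : Icc (0:ℝ) 1, ‖Ψ' (ζ₂ + (θ : ℝ) • (ξ₂ - ζ₂))‖) * ‖ξ₂ - ξ₁ - ζ₂ + ζ₁‖ +
        L * max ‖ξ₂ - ξ₁‖ ‖ζ₂ - ζ₁‖ * ‖ξ₁ - ζ₁‖ := by
  have hcont : Continuous Ψ' := by
    have : LipschitzWith ⟨L, hL.le⟩ Ψ' := by
      apply LipschitzWith.of_dist_le_mul
      intro x y
      rw [dist_eq_norm, dist_eq_norm]
      exact hlip x y
    exact this.continuous
  have hbdd : BddAbove (range fun θ : Icc (0:ℝ) 1 => ‖Ψ' (ζ₂ + (θ : ℝ) • (ξ₂ - ζ₂))‖) := by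
    apply IsCompact.bddAbove
    apply isCompact_range
    fun_prop
  have hline : ∀ (p v : E) (t : ℝ),
      HasDerivAt (fun t : ℝ => Ψ (p + t • v)) (Ψ' (p + t • v) v) t := by
    intro p v t
    have h1 : HasDerivAt (fun t : ℝ => p + t • v) v t := by
      simpa using ((hasDerivAt_id t).smul_const v).const_add p
    exact (hderiv (p + t • v)).comp_hasDerivAt t h1
  have key := norm_image_sub_le_of_norm_deriv_le_segment_01'
    (f := fun t : ℝ => Ψ (ζ₂ + t • (ξ₂ - ζ₂)) - Ψ (ζ₁ + t • (ξ₁ - ζ₁)))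
    (f' := fun t : ℝ => Ψ' (ζ₂ + t • (ξ₂ - ζ₂)) (ξ₂ - ζ₂) - Ψ' (ζ₁ + t • (ξ₁ - ζ₁)) (ξ₁ - ζ₁))
    (C := (⨆ θ : Icc (0:ℝ) 1, ‖Ψ' (ζ₂ + (θ : ℝ) • (ξ₂ - ζ₂))‖) * ‖ξ₂ - ξ₁ - ζ₂ + ζ₁‖ +
        L * max ‖ξ₂ - ξ₁‖ ‖ζ₂ - ζ₁‖ * ‖ξ₁ - ζ₁‖)
    (fun t _ => ((hline _ _ t).sub (hline _ _ t)).hasDerivWithinAt) ?_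
  · have e : Ψ ξ₂ - Ψ ξ₁ - Ψ ζ₂ + Ψ ζ₁ = Ψ ξ₂ - Ψ ξ₁ - (Ψ ζ₂ - Ψ ζ₁) := by abel
    rw [e]
    simpa using key
  · intro t ht
    set a := ζ₂ + t • (ξ₂ - ζ₂) with ha
    set b := ζ₁ + t • (ξ₁ - ζ₁) with hb
    have e : Ψ' a (ξ₂ - ζ₂) - Ψ' b (ξ₁ - ζ₁) =
        Ψ' a (ξ₂ - ξ₁ - ζ₂ + ζ₁) + (Ψ' a - Ψ' b) (ξ₁ - ζ₁) := by
      simp only [map_sub, map_add, ContinuousLinearMap.sub_apply]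
      abel
    have hab : ‖a - b‖ ≤ max ‖ξ₂ - ξ₁‖ ‖ζ₂ - ζ₁‖ := by
      have e2 : a - b = t • (ξ₂ - ξ₁) + (1 - t) • (ζ₂ - ζ₁) := by
        rw [ha, hb]; module
      have h0 : 0 ≤ 1 - t := by linarith [ht.2]
      calc ‖a - b‖ ≤ t * ‖ξ₂ - ξ₁‖ + (1 - t) * ‖ζ₂ - ζ₁‖ := by
            rw [e2]
            refine (norm_add_le _ _).trans ?_
            rw [norm_smul, norm_smul, Real.norm_of_nonneg ht.1, Real.norm_of_nonneg h0]
        _ ≤ t * max ‖ξ₂ - ξ₁‖ ‖ζ₂ - ζ₁‖ + (1 - t) * max ‖ξ₂ - ξ₁‖ ‖ζ₂ - ζ₁‖ :=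
            add_le_add (mul_le_mul_of_nonneg_left (le_max_left _ _) ht.1)
              (mul_le_mul_of_nonneg_left (le_max_right _ _) h0)
        _ = _ := by ring
    have hsup := le_ciSup hbdd ⟨t, ht.1, ht.2.le⟩
    rw [e]
    refine (norm_add_le _ _).trans (add_le_add ?_ ?_)
    · exact ((Ψ' a).le_opNorm _).trans (mul_le_mul_of_nonneg_right hsup (norm_nonneg _))
    · exact ((Ψ' a - Ψ' b).le_opNorm _).trans (mul_le_mul_of_nonneg_right
        ((hlip a b).trans (mul_le_mul_of_nonneg_left hab hL.le)) (norm_nonneg _))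
end

section
/- Assume in addition that r0 is small enough that S'(h) : ℝ^k → E is injective for every h ∈ B_{ℝ^k}(h0,r0). Then there exist δ ∈ (0,r0) and r1 > 0 such that: (i) h0 is the only point h in the closed ball B̄_{ℝ^k}(h0,δ) satisfying π_{1,h}(ξ0 − S(h)) = 0; (ii) for every ξ ∈ B_E(ξ0,r1) there exists h ∈ B_{ℝ^k}(h0,δ) with π_{1,h}(ξ − S(h)) = 0; (iii) every map H : B_E(ξ0,r1) → B̄_{ℝ^k}(h0,δ) satisfying π_{1,H(ξ)}(ξ − S(H(ξ))) = 0 for all ξ ∈ B_E(ξ0,r1) satisfies H(ξ) → h0 as ξ → ξ0. -/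
open Set Metric Topology Filter

section Helpers
open MeasureTheory

/-- the integral of det (1 + t A) is polynomial in t -/
lemma aux_poly {n : ℕ} (A : EuclideanSpace ℝ (Fin n) → (EuclideanSpace ℝ (Fin n) →L[ℝ] EuclideanSpace ℝ (Fin n)))
    (hA : Continuous A) :
    ∃ P : Polynomial ℝ, ∀ t : ℝ,
      ∫ x in ball (0 : EuclideanSpace ℝ (Fin n)) 1, (ContinuousLinearMap.id ℝ _ + t • A x).det = P.eval t := by
  classical
  let b := (EuclideanSpace.basisFun (Fin n) ℝ).toBasis
  let M : Matrix (Fin n) (Fin n) C(EuclideanSpace ℝ (Fin n), ℝ) := Matrix.of fun i j =>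
    ⟨fun x => LinearMap.toMatrix b b (A x : _ →ₗ[ℝ] _) i j, by
      simp only [LinearMap.toMatrix_apply, b]
      simp
      fun_prop⟩
  let p : Polynomial C(EuclideanSpace ℝ (Fin n), ℝ) := (1 + (Polynomial.X : Polynomial C(EuclideanSpace ℝ (Fin n), ℝ)) • M.map Polynomial.C).det
  have key : ∀ (t : ℝ) x, (ContinuousLinearMap.id ℝ _ + t • A x).det = ∑ i ∈ Finset.range (p.natDegree + 1), p.coeff i x * t ^ i := by
    intro t x
    let φ : C(EuclideanSpace ℝ (Fin n), ℝ) →+* ℝ := (Pi.evalRingHom (fun _ : EuclideanSpace ℝ (Fin n) => ℝ) x).comp ContinuousMap.coeFnRingHom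
    have h1 : ∑ i ∈ Finset.range (p.natDegree + 1), p.coeff i x * t ^ i = Polynomial.eval₂RingHom φ t p := by
      rw [Polynomial.coe_eval₂RingHom, Polynomial.eval₂_eq_sum_range]
      rfl
    rw [h1, RingHom.map_det]
    rw [ContinuousLinearMap.det, ← LinearMap.det_toMatrix b]
    congr 1
    ext i j
    have hM : φ (M i j) = LinearMap.toMatrix b b (A x : _ →ₗ[ℝ] _) i j := rfl
    have hb : LinearMap.toMatrix b b ((ContinuousLinearMap.id ℝ _ + t • A x : EuclideanSpace ℝ (Fin n) →L[ℝ] EuclideanSpace ℝ (Fin n)) : EuclideanSpace ℝ (Fin n) →ₗ[ℝ] EuclideanSpace ℝ (Fin n)) = 1 + t • LinearMap.toMatrix b b (A x : _ →ₗ[ℝ] _) := by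
      rw [← LinearMap.toMatrix_id b, ← map_smul, ← map_add]
      rfl
    rw [hb]
    rw [Matrix.add_apply, Matrix.smul_apply, ← hM, RingHom.mapMatrix_apply, Matrix.map_apply,
      Matrix.add_apply, Matrix.smul_apply, Matrix.map_apply, map_add, smul_eq_mul, smul_eq_mul, map_mul]
    by_cases hij : i = j <;> simp [Matrix.one_apply, hij]
  refine ⟨∑ i ∈ Finset.range (p.natDegree + 1), Polynomial.C (∫ x in ball (0 : EuclideanSpace ℝ (Fin n)) 1, p.coeff i x) * Polynomial.X ^ i, fun t => ?_⟩
  simp_rw [key]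
  rw [integral_finsetSum]
  · simp [Polynomial.eval_finsetSum, integral_mul_const]
  · intro i _
    have : Continuous fun x => p.coeff i x * t ^ i := by fun_prop
    exact (this.continuousOn.integrableOn_compact (isCompact_closedBall 0 1)).mono_set ball_subset_closedBall

lemma aux_no_retract {n : ℕ} (r : EuclideanSpace ℝ (Fin n) → EuclideanSpace ℝ (Fin n))
    (hr : ContDiff ℝ 1 r) (h1 : ∀ x, ‖r x‖ = 1) (h2 : ∀ x, ‖x‖ = 1 → r x = x) : False := by
  let X := EuclideanSpace ℝ (Fin n)
  let A : X → (X →L[ℝ] X) := fun x => fderiv ℝ r x - ContinuousLinearMap.id ℝ X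
  have hA : Continuous A := (hr.continuous_fderiv (by simp)).sub continuous_const
  obtain ⟨P, hP⟩ := aux_poly A hA
  have hrd : ∀ x, HasFDerivAt r (fderiv ℝ r x) x := fun x =>
    (hr.differentiable (by simp) x).hasFDerivAt
  have hgd : ∀ x, HasFDerivAt (fun y => r y - y) (A x) x := fun x =>
    (hrd x).sub (hasFDerivAt_id x)
  obtain ⟨C, hC⟩ := (isCompact_closedBall (0 : X) 1).exists_bound_of_continuousOn hA.continuousOn
  -- P(1) = 0
  have hP1 : P.eval 1 = 0 := by
    rw [← hP 1]
    apply integral_eq_zero_of_ae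
    refine Eventually.of_forall fun x => ?_
    have e : ContinuousLinearMap.id ℝ X + (1:ℝ) • A x = fderiv ℝ r x := by simp [A]
    simp only [Pi.zero_apply]
    rw [e]
    by_contra hne
    have hu : Function.Surjective (fderiv ℝ r x) := by
      have := LinearMap.equivOfDetNeZero (fderiv ℝ r x : X →ₗ[ℝ] X) hne
      intro y
      exact ⟨(LinearMap.equivOfDetNeZero (fderiv ℝ r x : X →ₗ[ℝ] X) hne).symm y,
        (LinearMap.equivOfDetNeZero (fderiv ℝ r x : X →ₗ[ℝ] X) hne).apply_symm_apply y⟩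
    obtain ⟨v, hv⟩ := hu (r x)
    have h3 := (hrd x).norm_sq
    have h4 : (fun y => ‖r y‖ ^ 2) = fun _ => (1:ℝ) := by ext y; simp [h1]
    rw [h4] at h3
    have h5 := h3.unique (hasFDerivAt_const (1:ℝ) x)
    have h6 := congrArg (fun L => L v) h5
    simp [hv, h1] at h6
  -- small t
  have hpos : ∃ η > 0, ∀ B : X →L[ℝ] X, ‖B‖ < η → 0 < (ContinuousLinearMap.id ℝ X + B).det := by
    have hc : Continuous fun B : X →L[ℝ] X => (ContinuousLinearMap.id ℝ X + B).det :=
      ContinuousLinearMap.continuous_det.comp (by fun_prop)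
    have : ∀ᶠ B in 𝓝 (0 : X →L[ℝ] X), 0 < (ContinuousLinearMap.id ℝ X + B).det := by
      apply hc.continuousAt.eventually (lt_mem_nhds _)
      simp [ContinuousLinearMap.det]
    obtain ⟨η, h, h'⟩ := Metric.eventually_nhds_iff.1 this
    exact ⟨η, h, fun B hB => h' (by simpa using hB)⟩
  obtain ⟨η, hη, hdet⟩ := hpos
  have hC0 : 0 ≤ C := (norm_nonneg _).trans (hC 0 (by simp))
  have hsmall : ∀ t : ℝ, 0 < t → t < 1 → t * C < 1 → t * C < η →
      P.eval t = (volume (ball (0:X) 1)).toReal := by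
    intro t ht ht1 htC htη
    let f : X → X := fun x => x + t • (r x - x)
    have hfd : ∀ x, HasFDerivAt f (ContinuousLinearMap.id ℝ X + t • A x) x := fun x =>
      (hasFDerivAt_id x).add ((hgd x).const_smul t)
    have happ : ApproximatesLinearOn f ((ContinuousLinearEquiv.refl ℝ X : X ≃L[ℝ] X) : X →L[ℝ] X) (ball 0 1) (Real.toNNReal (t * C)) := by
      intro x hx y hy
      rw [Real.coe_toNNReal _ (by positivity)]
      refine (convex_ball (0:X) 1).norm_image_sub_le_of_norm_hasFDerivWithin_le' (fun z hz => (hfd z).hasFDerivWithinAt) ?_ hy hx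
      intro z hz
      have : ContinuousLinearMap.id ℝ X + t • A z - ((ContinuousLinearEquiv.refl ℝ X : X ≃L[ℝ] X) : X →L[ℝ] X) = t • A z := by
        ext; simp
      rw [this, norm_smul, Real.norm_of_nonneg ht.le]
      exact mul_le_mul_of_nonneg_left (hC z (ball_subset_closedBall hz)) ht.le
    have hinj : InjOn f (ball 0 1) := by
      intro x hx y hy hxy
      have := happ x hx y hy
      rw [hxy, Real.coe_toNNReal _ (by positivity), sub_self, zero_sub, norm_neg] at this
      by_contra hne
      have h0 : 0 < ‖x - y‖ := norm_pos_iff.2 (sub_ne_zero.2 hne)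
      change ‖x - y‖ ≤ t * C * ‖x - y‖ at this
      nlinarith
    have hopen : IsOpen (f '' ball 0 1) := by
      refine happ.open_image ⟨fun x => x, 1, fun y => by simp, fun y => by simp⟩ isOpen_ball (Or.inr ?_)
      rw [← NNReal.coe_lt_coe, Real.coe_toNNReal _ (by positivity)]
      simpa using htC
    have hfc : Continuous f := by
      have := hr.continuous
      fun_prop
    have hsub : f '' ball 0 1 ⊆ ball 0 1 := by
      rintro _ ⟨x, hx, rfl⟩
      rw [mem_ball_zero_iff] at hx ⊢
      have : f x = (1 - t) • x + t • r x := by simp only [f]; module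
      rw [this]
      calc _ ≤ ‖(1 - t) • x‖ + ‖t • r x‖ := norm_add_le _ _
        _ = (1 - t) * ‖x‖ + t := by
          rw [norm_smul, norm_smul, h1, Real.norm_of_nonneg ht.le, Real.norm_of_nonneg (by linarith)]; ring
        _ < 1 := by nlinarith
    have himg : f '' ball 0 1 = ball 0 1 := by
      apply hsub.antisymm
      have hpre : IsPreconnected (ball (0:X) 1) := (convex_ball _ _).isPreconnected
      have hcl : IsClosed (f '' closedBall 0 1) := ((isCompact_closedBall (0:X) 1).image hfc).isClosed
      have hdisj : ball (0:X) 1 ∩ f '' closedBall 0 1 ⊆ f '' ball 0 1 := by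
        rintro _ ⟨hy, x, hx, rfl⟩
        refine ⟨x, ?_, rfl⟩
        rw [mem_closedBall_zero_iff] at hx
        rw [mem_ball_zero_iff] at hy ⊢
        refine lt_of_le_of_ne hx fun hx1 => ?_
        simp [f, h2 x hx1, hx1] at hy
      by_contra hns
      obtain ⟨y, hy, hyn⟩ := not_subset.1 hns
      obtain ⟨z, hz, hz1, hz2⟩ := hpre _ _ hopen hcl.isOpen_compl
        (fun z hz => by
          by_cases h : z ∈ f '' closedBall 0 1
          · exact Or.inl (hdisj ⟨hz, h⟩)
          · exact Or.inr h)
        ⟨f 0, hsub ⟨0, by simp, rfl⟩, ⟨0, by simp, rfl⟩⟩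
        ⟨y, hy, fun h => hyn (hdisj ⟨hy, h⟩)⟩
      exact hz2 (image_mono ball_subset_closedBall hz1)
    have hcv := integral_image_eq_integral_abs_det_fderiv_smul volume (measurableSet_ball (x := (0:X)) (ε := 1))
      (fun x _ => (hfd x).hasFDerivWithinAt) hinj (fun _ => (1:ℝ))
    rw [himg] at hcv
    simp only [smul_eq_mul, mul_one] at hcv
    rw [← hP t]
    have : (volume (ball (0:X) 1)).toReal = ∫ x in ball (0:X) 1, (1:ℝ) := by
      simp [Measure.real]
    rw [this, hcv]
    refine setIntegral_congr_fun measurableSet_ball fun x hx => ?_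
    refine (abs_of_pos (hdet _ ?_)).symm
    rw [norm_smul, Real.norm_of_nonneg ht.le]
    exact (mul_le_mul_of_nonneg_left (hC x (ball_subset_closedBall hx)) ht.le).trans_lt htη
  have hPc : P = Polynomial.C (volume (ball (0:X) 1)).toReal := by
    apply Polynomial.eq_of_infinite_eval_eq
    have hτ : 0 < min 1 (min 1 η / (C + 1)) := by positivity
    refine (Ioo_infinite hτ).mono ?_
    rintro t ⟨ht0, ht⟩
    rw [lt_min_iff, lt_div_iff₀ (by positivity), lt_min_iff] at ht
    simp only [mem_ofPred_eq, Polynomial.eval_C]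
    exact hsmall t ht0 ht.1 (by nlinarith) (by nlinarith)
  rw [hPc, Polynomial.eval_C] at hP1
  have := ENNReal.toReal_pos (measure_ball_pos volume (0:X) one_pos).ne' measure_ball_lt_top.ne
  linarith

lemma aux_brouwer {n : ℕ} (g : EuclideanSpace ℝ (Fin n) → EuclideanSpace ℝ (Fin n))
    (hg : Continuous g) (hb : ∀ x, ‖g x‖ ≤ 1 / 2) : ∃ x, g x = x := by
  let X := EuclideanSpace ℝ (Fin n)
  by_contra! hne
  have hε : ∃ ε > 0, ∀ x ∈ closedBall (0:X) 1, ε ≤ ‖g x - x‖ := by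
    obtain ⟨x0, -, hx0⟩ := (isCompact_closedBall (0:X) 1).exists_isMinOn ⟨0, by simp⟩
      (f := fun x => ‖g x - x‖) (by fun_prop)
    exact ⟨‖g x0 - x0‖, norm_pos_iff.2 (sub_ne_zero.2 (hne x0)), fun x hx => hx0 hx⟩
  obtain ⟨ε, hε, hmin⟩ := hε
  obtain ⟨p, hp, hpg, -⟩ := hg.exists_contDiff_approx 1 (ε := fun _ => min ε (1/4)) continuous_const
    (fun _ => by positivity)
  let χ : ContDiffBump (0:X) := ⟨3/4, 1, by norm_num, by norm_num⟩
  let F : X → X := fun x => x - χ x • p x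
  have hF : ContDiff ℝ 1 F := contDiff_id.sub (χ.contDiff.smul hp)
  have hpn : ∀ x, ‖p x‖ < 3/4 := by
    intro x
    have h1 : dist (p x) (g x) < 1/4 := (hpg x).trans_le (min_le_right _ _)
    rw [dist_eq_norm] at h1
    have := norm_add_le (p x - g x) (g x)
    rw [sub_add_cancel] at this
    linarith [hb x]
  have hF0 : ∀ x, F x ≠ 0 := by
    intro x hx
    have hx' : x = χ x • p x := sub_eq_zero.1 hx
    by_cases h : ‖x‖ ≤ 3/4
    · have h1 : χ x = 1 := χ.one_of_mem_closedBall (by simpa [χ] using h)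
      rw [h1, one_smul] at hx'
      have h2 := hmin x (by simp; linarith)
      have h3 : dist (p x) (g x) < ε := (hpg x).trans_le (min_le_left _ _)
      rw [← hx', dist_comm, dist_eq_norm] at h3
      linarith
    · have h1 : ‖x‖ = χ x * ‖p x‖ := by
        conv_lhs => rw [hx', norm_smul, Real.norm_of_nonneg χ.nonneg]
      have h2 : χ x ≤ 1 := χ.le_one
      have h3 : 0 ≤ χ x := χ.nonneg
      nlinarith [hpn x, norm_nonneg (p x)]
  refine aux_no_retract (fun x => ‖F x‖⁻¹ • F x) ?_ ?_ ?_
  · exact ((hF.norm ℝ hF0).inv fun x => norm_ne_zero_iff.2 (hF0 x)).smul hF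
  · intro x
    rw [norm_smul, norm_inv, norm_norm, inv_mul_cancel₀ (norm_ne_zero_iff.2 (hF0 x))]
  · intro x hx
    have h1 : χ x = 0 := χ.zero_of_le_dist (by simp [χ, hx])
    simp [F, h1, hx]

lemma aux_brouwer_ball {n : ℕ} (h0 : EuclideanSpace ℝ (Fin n)) (δ : ℝ) (hδ : 0 < δ)
    (g : EuclideanSpace ℝ (Fin n) → EuclideanSpace ℝ (Fin n))
    (hg : ContinuousOn g (closedBall h0 δ)) (hb : ∀ x ∈ closedBall h0 δ, ‖g x‖ ≤ δ / 2) :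
    ∃ x ∈ ball h0 δ, g x = x - h0 := by
  let X := EuclideanSpace ℝ (Fin n)
  let q : X → X := fun x => h0 + (δ / max 1 ‖x‖) • x
  have hm : ∀ x : X, 0 < max 1 ‖x‖ := fun x => lt_max_of_lt_left one_pos
  have hq : Continuous q := by
    refine continuous_const.add (Continuous.fun_smul ?_ continuous_id)
    exact continuous_const.div (by fun_prop) fun x => (hm x).ne'
  have hqm : ∀ x, q x ∈ closedBall h0 δ := by
    intro x
    rw [mem_closedBall, dist_eq_norm]
    simp only [q, add_sub_cancel_left]
    rw [norm_smul, Real.norm_of_nonneg (by have := hm x; positivity), div_mul_eq_mul_div, div_le_iff₀ (hm x)]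
    exact mul_le_mul_of_nonneg_left (le_max_right _ _) hδ.le
  obtain ⟨x, hx⟩ := aux_brouwer (fun x => δ⁻¹ • g (q x))
    ((hg.comp_continuous hq hqm).const_smul δ⁻¹) (fun x => by
      rw [norm_smul, norm_inv, Real.norm_of_nonneg hδ.le, inv_mul_le_iff₀ hδ]
      linarith [hb _ (hqm x)])
  have hxn : ‖δ⁻¹ • g (q x)‖ ≤ 1 / 2 := by
    rw [norm_smul, norm_inv, Real.norm_of_nonneg hδ.le, inv_mul_le_iff₀ hδ]
    linarith [hb _ (hqm x)]
  rw [hx] at hxn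
  have hqx : q x = h0 + δ • x := by
    simp only [q]; rw [max_eq_left (by linarith), div_one]
  refine ⟨q x, ?_, ?_⟩
  · rw [hqx, mem_ball, dist_eq_norm, add_sub_cancel_left, norm_smul, Real.norm_of_nonneg hδ.le]
    nlinarith
  · have : g (q x) = δ • x := by
      conv_rhs => rw [← hx]
      rw [smul_inv_smul₀ hδ.ne']
    rw [this, hqx, add_sub_cancel_left]

end Helpers

/- Construction of the function H: there are δ ∈ (0,r0) and r1 > 0 such that h0 is the
only solution of π_{1,h}(ξ0 − S(h)) = 0 in the closed δ-ball, for every ξ near ξ0 there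
is a solution h of π_{1,h}(ξ − S(h)) = 0 in the δ-ball, and every selection H of such
solutions satisfies H(ξ) → h0 as ξ → ξ0. -/
theorem stmt10
    {E : Type*} [NormedAddCommGroup E] [NormedSpace ℝ E] [CompleteSpace E]
    {k : ℕ} (hk : 1 ≤ k)
    -- (A1)
    (h0 : EuclideanSpace ℝ (Fin k)) (r0 : ℝ) (hr0 : 0 < r0)
    (S : EuclideanSpace ℝ (Fin k) → E)
    (S' : EuclideanSpace ℝ (Fin k) → (EuclideanSpace ℝ (Fin k) →L[ℝ] E))
    (hS : ∀ h ∈ ball h0 r0, HasFDerivAt S (S' h) h)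
    (hS'cont : ContinuousOn S' (ball h0 r0))
    -- (A2)
    (hA2 : Function.Injective ⇑(S' h0))
    -- S'(h) is injective for every h in the ball
    (hinj : ∀ h ∈ ball h0 r0, Function.Injective ⇑(S' h))
    -- (A3)
    (π1 : EuclideanSpace ℝ (Fin k) → E →L[ℝ] E)
    (hproj : ∀ h ∈ ball h0 r0, (π1 h).comp (π1 h) = π1 h)
    (hrange : ∀ h ∈ ball h0 r0, range ⇑(π1 h) = range ⇑(S' h))
    (hπ1cont : ContinuousOn π1 (ball h0 r0)) :
    ∃ δ ∈ Ioo (0:ℝ) r0, ∃ r1 > (0:ℝ),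
      -- (i) h0 is the only solution in the closed δ-ball
      (∀ h ∈ closedBall h0 δ, π1 h (S h0 - S h) = 0 → h = h0) ∧
      -- (ii) existence of a solution for every ξ near ξ0
      (∀ ξ ∈ ball (S h0) r1, ∃ h ∈ ball h0 δ, π1 h (ξ - S h) = 0) ∧
      -- (iii) any selection H of solutions tends to h0 as ξ → ξ0
      (∀ H : E → EuclideanSpace ℝ (Fin k),
        (∀ ξ ∈ ball (S h0) r1, H ξ ∈ closedBall h0 δ ∧ π1 (H ξ) (ξ - S (H ξ)) = 0) →
        Tendsto H (𝓝[ball (S h0) r1] (S h0)) (𝓝 h0)) := by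
  -- left inverse of S'(h0)
  have hT : ∃ T : E →L[ℝ] EuclideanSpace ℝ (Fin k), ∀ x, T (S' h0 x) = x := by
    obtain ⟨g, hg⟩ := (S' h0).toLinearMap.exists_leftInverse_of_injective
      (LinearMap.ker_eq_bot.2 hA2)
    have hmem : h0 ∈ ball h0 r0 := mem_ball_self hr0
    have hmr : ∀ y, π1 h0 y ∈ LinearMap.range (S' h0).toLinearMap := fun y => by
      have : π1 h0 y ∈ range ⇑(S' h0) := hrange h0 hmem ▸ mem_range_self y
      exact this
    let Q : E →L[ℝ] LinearMap.range (S' h0).toLinearMap := (π1 h0).codRestrict _ hmr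
    let G : LinearMap.range (S' h0).toLinearMap →L[ℝ] EuclideanSpace ℝ (Fin k) :=
      LinearMap.toContinuousLinearMap (g.comp (Submodule.subtype _))
    refine ⟨G.comp Q, fun x => ?_⟩
    have h1 : π1 h0 (S' h0 x) = S' h0 x := by
      obtain ⟨y, hy⟩ : S' h0 x ∈ range ⇑(π1 h0) := hrange h0 hmem ▸ mem_range_self x
      rw [← hy]
      exact congrArg (fun L => L y) (hproj h0 hmem)
    have h2 : g (S' h0 x) = x := congrArg (fun L => L x) hg
    change g (π1 h0 (S' h0 x)) = x
    rw [h1, h2]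
  obtain ⟨T, hT⟩ := hT
  have hnh : ball h0 r0 ∈ 𝓝 h0 := ball_mem_nhds h0 hr0
  have hfix : ∀ h ∈ ball h0 r0, ∀ x, π1 h (S' h x) = S' h x := by
    intro h hh x
    obtain ⟨y, hy⟩ : S' h x ∈ range ⇑(π1 h) := hrange h hh ▸ mem_range_self x
    rw [← hy]
    exact congrArg (fun L => L y) (hproj h hh)
  have hSc : ContinuousAt S' h0 := hS'cont.continuousAt hnh
  have hπc : ContinuousAt π1 h0 := hπ1cont.continuousAt hnh
  set K : ℝ := ‖T‖ * (‖π1 h0‖ + 1) + 1 with hK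
  have hK0 : 0 < K := by positivity
  have e1 : ∀ᶠ h in 𝓝 h0, ‖π1 h‖ < ‖π1 h0‖ + 1 :=
    hπc.norm.eventually (gt_mem_nhds (by linarith))
  -- small constant
  set c : ℝ := 1 / (16 * K) with hc
  have hc0 : 0 < c := by positivity
  have hTK : ‖T‖ ≤ K := by
    have : 0 ≤ ‖T‖ * ‖π1 h0‖ := by positivity
    rw [hK]; linarith
  have hcK : c * K = 1 / 16 := by rw [hc]; field_simp
  have e2 : ∀ᶠ h in 𝓝 h0, ‖S' h - S' h0‖ < c := by
    have := Metric.tendsto_nhds.1 hSc c hc0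
    simpa [dist_eq_norm] using this
  have e3 : ∀ᶠ h in 𝓝 h0, ‖S h - S h0 - S' h0 (h - h0)‖ ≤ c * ‖h - h0‖ :=
    (hS h0 (mem_ball_self hr0)).isLittleO.def hc0
  obtain ⟨ρ, hρ, hall⟩ := Metric.eventually_nhds_iff.1 (e1.and (e2.and e3))
  set δ : ℝ := min ρ r0 / 2 with hδd
  have hmin : 0 < min ρ r0 := lt_min hρ hr0
  have hδ : 0 < δ := by positivity
  have hδρ : δ < ρ := by have := min_le_left ρ r0; linarith
  have hδr : δ < r0 := by have := min_le_right ρ r0; linarith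
  have hsub : closedBall h0 δ ⊆ ball h0 r0 := closedBall_subset_ball hδr
  have hb : ∀ h ∈ closedBall h0 δ, ‖π1 h‖ < ‖π1 h0‖ + 1 ∧ ‖S' h - S' h0‖ < c ∧
      ‖S h - S h0 - S' h0 (h - h0)‖ ≤ c * ‖h - h0‖ := fun h hh =>
    hall ((mem_closedBall.1 hh).trans_lt hδρ)
  have hTS : ∀ h ∈ closedBall h0 δ, ∀ x, ‖T (S' h x) - x‖ ≤ 1 / 16 * ‖x‖ := by
    intro h hh x
    have h1 : T (S' h x) - x = T ((S' h - S' h0) x) := by simp [hT]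
    rw [h1]
    calc _ ≤ ‖T‖ * (‖S' h - S' h0‖ * ‖x‖) :=
          (T.le_opNorm _).trans (mul_le_mul_of_nonneg_left ((S' h - S' h0).le_opNorm x) (norm_nonneg _))
      _ ≤ K * (c * ‖x‖) := by
          gcongr
          exact (hb h hh).2.1.le
      _ = 1 / 16 * ‖x‖ := by rw [← hcK]; ring
  have hTπ : ∀ h ∈ closedBall h0 δ, ∀ v, ‖T (π1 h v)‖ ≤ K * ‖v‖ := by
    intro h hh v
    calc _ ≤ ‖T‖ * (‖π1 h‖ * ‖v‖) :=
          (T.le_opNorm _).trans (mul_le_mul_of_nonneg_left ((π1 h).le_opNorm v) (norm_nonneg _))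
      _ = (‖T‖ * ‖π1 h‖) * ‖v‖ := by ring
      _ ≤ K * ‖v‖ := by
          gcongr
          have := mul_le_mul_of_nonneg_left (hb h hh).1.le (norm_nonneg T)
          linarith
  have hker : ∀ h ∈ closedBall h0 δ, ∀ v, T (π1 h v) = 0 → π1 h v = 0 := by
    intro h hh v hv
    obtain ⟨w, hw⟩ : π1 h v ∈ range ⇑(S' h) := hrange h (hsub hh) ▸ mem_range_self v
    have h1 := hTS h hh w
    rw [hw, hv, zero_sub, norm_neg] at h1
    have : ‖w‖ = 0 := by linarith [norm_nonneg w]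
    rw [← hw, norm_eq_zero.1 this, map_zero]
  have hmain : ∀ h ∈ closedBall h0 δ, ‖T (π1 h (S h0 - S h)) + (h - h0)‖ ≤ 1 / 4 * ‖h - h0‖ := by
    intro h hh
    obtain ⟨-, hb2, hb3⟩ := hb h hh
    have h1 : T (π1 h (S h0 - S h)) + (h - h0) =
        - T (π1 h (S h - S h0 - S' h (h - h0))) - (T (S' h (h - h0)) - (h - h0)) := by
      rw [map_sub (π1 h) (S h - S h0), hfix h (hsub hh)]
      simp only [map_sub]
      abel
    have h2 : ‖S h - S h0 - S' h (h - h0)‖ ≤ 2 * c * ‖h - h0‖ := by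
      have e : S h - S h0 - S' h (h - h0) =
          (S h - S h0 - S' h0 (h - h0)) - (S' h - S' h0) (h - h0) := by
        rw [sub_apply]; abel
      rw [e]
      have h3 := (S' h - S' h0).le_opNorm (h - h0)
      have h4 := mul_le_mul_of_nonneg_right hb2.le (norm_nonneg (h - h0))
      refine (norm_sub_le _ _).trans ?_
      linarith
    rw [h1]
    refine (norm_sub_le _ _).trans ?_
    rw [norm_neg]
    have h5 := hTπ h hh (S h - S h0 - S' h (h - h0))
    have h6 := mul_le_mul_of_nonneg_left h2 hK0.le
    have h7 : K * (2 * c * ‖h - h0‖) = 1 / 8 * ‖h - h0‖ := by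
      have : K * (2 * c * ‖h - h0‖) = 2 * (c * K) * ‖h - h0‖ := by ring
      rw [this, hcK]; ring
    have h8 := hTS h hh (h - h0)
    have h9 := norm_nonneg (h - h0)
    linarith
  have hsplit : ∀ h ξ, T (π1 h (ξ - S h)) = T (π1 h (ξ - S h0)) + T (π1 h (S h0 - S h)) := by
    intro h ξ
    rw [← map_add, ← map_add, sub_add_sub_cancel]
  have hest : ∀ h ∈ closedBall h0 δ, ∀ ξ, π1 h (ξ - S h) = 0 → ‖h - h0‖ ≤ 2 * K * ‖ξ - S h0‖ := by
    intro h hh ξ hz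
    have h1 := hsplit h ξ
    rw [hz, map_zero] at h1
    have h2 : h - h0 = T (π1 h (ξ - S h0)) + (T (π1 h (S h0 - S h)) + (h - h0)) := by
      rw [← add_assoc, ← h1, zero_add]
    have h3 := norm_add_le (T (π1 h (ξ - S h0))) (T (π1 h (S h0 - S h)) + (h - h0))
    rw [← h2] at h3
    have h4 := hTπ h hh (ξ - S h0)
    have h5 := hmain h hh
    have h6 : 0 ≤ K * ‖ξ - S h0‖ := by positivity
    linarith
  refine ⟨δ, ⟨hδ, hδr⟩, δ / (4 * K), by positivity, ?_, ?_, ?_⟩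
  · intro h hh hz
    have := hest h hh _ hz
    simp only [sub_self, norm_zero, mul_zero] at this
    exact sub_eq_zero.1 (norm_le_zero_iff.1 this)
  · intro ξ hξ
    have hScont : ContinuousOn S (closedBall h0 δ) := fun h hh =>
      (hS h (hsub hh)).continuousAt.continuousWithinAt
    obtain ⟨h, hh, heq⟩ := aux_brouwer_ball h0 δ hδ (fun h => T (π1 h (ξ - S h)) + (h - h0))
      (by
        refine ContinuousOn.add (T.continuous.comp_continuousOn ?_) (by fun_prop)
        exact (hπ1cont.mono hsub).clm_apply (continuousOn_const.sub hScont))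
      (by
        intro h hh
        rw [hsplit, add_assoc]
        refine (norm_add_le _ _).trans ?_
        have h1 := hTπ h hh (ξ - S h0)
        have h2 := hmain h hh
        have h3 : ‖h - h0‖ ≤ δ := by simpa [dist_eq_norm] using hh
        have h4 : ‖ξ - S h0‖ < δ / (4 * K) := by simpa [dist_eq_norm] using hξ
        rw [lt_div_iff₀ (by positivity)] at h4
        linarith)
    refine ⟨h, hh, hker h (ball_subset_closedBall hh) _ ?_⟩
    simpa using heq
  · intro H hH
    rw [tendsto_iff_norm_sub_tendsto_zero]
    refine squeeze_zero' (g := fun ξ => 2 * K * ‖ξ - S h0‖) (Eventually.of_forall fun _ => norm_nonneg _) ?_ ?_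
    · filter_upwards [self_mem_nhdsWithin] with ξ hξ
      exact hest _ (hH ξ hξ).1 ξ (hH ξ hξ).2
    · have : Continuous fun ξ : E => 2 * K * ‖ξ - S h0‖ := by fun_prop
      have h1 := (this.tendsto (S h0)).mono_left (nhdsWithin_le_nhds (s := ball (S h0) (δ / (4 * K))))
      simpa using h1
end
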